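/- Let H > 0 and 0 < r < 1/(2H). Let D(r) ⊆ ℝ² be the open disk of center 0 and radius r, set z₀ = (1/(2H), 0), and define C = {p ∈ D(r) : |p − z₀| = 1/(2H)}, D⁺ = {p ∈ D(r) : |p − z₀| < 1/(2H)} (the component of D(r) \ C containing (r,0)). Let (u_n) be a sequence of solutions of (CMC) on D⁺ converging to a solution u of (CMC) on D⁺ (u_n → u and ∇u_n → ∇u uniformly on every compact subset of D⁺). Suppose that at least one of the following holds: (2a) for every n, u_n tends to +∞ at every point of C (for all P ∈ C, M ∈ ℝ there is δ > 0 with u_n > M on D⁺ ∩ B(P,δ)); or (2b) for every n, u_n is the restriction to D⁺ of a solution v_n of (CMC) on D(r), and C is a divergence line of (v_n). Then u tends to +∞ at every point of C: for every P ∈ C and M ∈ ℝ there is δ > 0 with u > M on D⁺ ∩ B(P,δ). -/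

import Mathlib

/-!
With `R = 1 / (2H)`, a solution satisfies `div X_f = 1 / R` for `X_f = ∇f / √(1 + |∇f|²)`, a field
of length less than one.

*Weak boundary values.* If a solution is large near `C`, then on its sublevel sets near `C` its
field `X_f` agrees with the outward unit normal `Y` of `C` up to an error whose integral over thin
layers along `C` is negligible. For solutions that tend to `+∞` on `C` this is vacuous: the sublevel
sets stay away from `C`. In case (2b) it holds for the limit: by the divergence theorem, the flux of
`X_{v_n}` through `C` is an integral over `D⁺`, and as `X_{v_n} → Y` on `C` and `X_{v_n} → X_u` in
`D⁺`, dominated convergence shows that `X_u` has the flux of `Y` through `C` in the weak sense.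

*Comparison.* Let `b` be a strict subsolution, bounded above, and let `f` have weak boundary values
`+∞`. The field `X_b - X_f` has positive divergence, its product with `∇(b - f)` is nonnegative, and
its flux through `C` is at most that of `Y - X_f`, which vanishes. Testing with functions of `b - f`
gives `b ≤ f`.

*Barriers.* The first barrier is `√G - k` with `G` a quadratic polynomial; it extends a lower bound
for `f` on a compact subset of `D⁺` to a neighborhood of a given point `P` of `C`. Where `G = 0` its
gradient is infinite and points into the domain, so that no boundary values of `f` are needed there.
The second barrier is `A log (h / (q + κ)) - Γ |Q - P|² / 2 - k`, where `q` is the power of `Q` with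
respect to the circle containing `C`; it is large at `P` and lies below the given lower bound of `f`
away from `P`. For small `A` it is a strict subsolution, because the curvature of the circles
`q = const` is at least `1 / R`. So a lower bound on a compact set forces `f > M` in a neighborhood
of `P` depending on that bound only. In case (2b) this applies to the limit itself; in case (2a) it
applies to the `u_n`, whose lower bounds on a compact set are uniform in `n`.
-/

open Real MeasureTheory Filter Set

noncomputable section

/-- Euclidean norm on `ℝ × ℝ`. -/
def enorm2 (p : ℝ × ℝ) : ℝ := Real.sqrt (p.1 ^ 2 + p.2 ^ 2)

/-- Partial derivative in the `x` direction. -/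
def pdx (u : ℝ × ℝ → ℝ) (p : ℝ × ℝ) : ℝ := fderiv ℝ u p (1, 0)

/-- Partial derivative in the `y` direction. -/
def pdy (u : ℝ × ℝ → ℝ) (p : ℝ × ℝ) : ℝ := fderiv ℝ u p (0, 1)

/-- The area element `W_u = √(1 + |∇u|²)`. -/
def Wgraph (u : ℝ × ℝ → ℝ) (p : ℝ × ℝ) : ℝ :=
  Real.sqrt (1 + (pdx u p) ^ 2 + (pdy u p) ^ 2)

/-- Upward unit normal of the graph of `u`. -/
def normalVec (u : ℝ × ℝ → ℝ) (p : ℝ × ℝ) : ℝ × ℝ × ℝ :=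
  (-pdx u p / Wgraph u p, -pdy u p / Wgraph u p, 1 / Wgraph u p)

/-- `u` is a (C²) solution of the constant mean curvature `H` equation on `Ω`. -/
def IsCMCSolution (H : ℝ) (Ω : Set (ℝ × ℝ)) (u : ℝ × ℝ → ℝ) : Prop :=
  ContDiffOn ℝ 2 u Ω ∧ ∀ p ∈ Ω,
    (1 + (pdy u p) ^ 2) * pdx (fun q => pdx u q) p
      - 2 * (pdx u p) * (pdy u p) * pdy (fun q => pdx u q) p
      + (1 + (pdx u p) ^ 2) * pdy (fun q => pdy u q) p
    = 2 * H * (1 + (pdx u p) ^ 2 + (pdy u p) ^ 2) ^ ((3 : ℝ) / 2)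

/-- `C` is a divergence line of the sequence `u` on `Ω`. -/
def IsDivergenceLine (H : ℝ) (Ω : Set (ℝ × ℝ)) (u : ℕ → ℝ × ℝ → ℝ)
    (C : Set (ℝ × ℝ)) : Prop :=
  ∃ z₁ : ℝ × ℝ, C ⊆ Ω ∧ (∀ q ∈ C, enorm2 (q - z₁) = 1 / (2 * H)) ∧
    IsConnected C ∧ C.Nontrivial ∧
    ∃ φ : ℕ → ℕ, StrictMono φ ∧ ∀ Q ∈ C,
      Tendsto (fun n => normalVec (u (φ n)) Q) atTop
        (nhds (2 * H * (z₁.1 - Q.1), 2 * H * (z₁.2 - Q.2), 0))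

/-! ### Vector calculus in the plane -/

/-- The Euclidean inner product on `ℝ × ℝ`, whose own norm is the maximum norm. -/
def dot (v w : ℝ × ℝ) : ℝ := v.1 * w.1 + v.2 * w.2

/-- The gradient of a function on the plane. -/
def grad (f : ℝ × ℝ → ℝ) (p : ℝ × ℝ) : ℝ × ℝ := (pdx f p, pdy f p)

/-- The divergence of a vector field on the plane. -/
def divergence (Z : ℝ × ℝ → ℝ × ℝ) (p : ℝ × ℝ) : ℝ :=
  pdx (fun q => (Z q).1) p + pdy (fun q => (Z q).2) p

/-- `f` is Fréchet differentiable at `p` with partial derivatives `a` and `b`. -/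
def HasPartials (f : ℝ × ℝ → ℝ) (a b : ℝ) (p : ℝ × ℝ) : Prop :=
  HasFDerivAt f (a • ContinuousLinearMap.fst ℝ ℝ ℝ + b • ContinuousLinearMap.snd ℝ ℝ ℝ) p

section dot

variable (v w : ℝ × ℝ)

theorem dot_self_nonneg : 0 ≤ dot v v := by
  unfold dot; nlinarith [sq_nonneg v.1, sq_nonneg v.2]

theorem dot_sq_le : dot v w ^ 2 ≤ dot v v * dot w w := by
  unfold dot; nlinarith [sq_nonneg (v.1 * w.2 - v.2 * w.1)]

theorem abs_dot_le : |dot v w| ≤ 2 * ‖v‖ * ‖w‖ := by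
  have h₁ : |v.1 * w.1| ≤ ‖v‖ * ‖w‖ := by
    rw [abs_mul]
    exact mul_le_mul (norm_fst_le v) (norm_fst_le w) (abs_nonneg _) (norm_nonneg v)
  have h₂ : |v.2 * w.2| ≤ ‖v‖ * ‖w‖ := by
    rw [abs_mul]
    exact mul_le_mul (norm_snd_le v) (norm_snd_le w) (abs_nonneg _) (norm_nonneg v)
  unfold dot
  linarith [abs_add_le (v.1 * w.1) (v.2 * w.2)]

variable {v w}

theorem dot_le_one (hv : dot v v ≤ 1) (hw : dot w w ≤ 1) : dot v w ≤ 1 :=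
  (sq_le_one_iff_abs_le_one _).1 ((dot_sq_le v w).trans
    (mul_le_one₀ hv (dot_self_nonneg w) hw)) |> le_of_abs_le

theorem norm_le_of_dot_self_le {r : ℝ} (hr : 0 ≤ r) (h : dot v v ≤ r ^ 2) : ‖v‖ ≤ r := by
  unfold dot at h
  rw [norm_prod_le_iff, Real.norm_eq_abs, Real.norm_eq_abs]
  exact ⟨abs_le_of_sq_le_sq (by nlinarith [sq_nonneg v.2]) hr,
    abs_le_of_sq_le_sq (by nlinarith [sq_nonneg v.1]) hr⟩

end dot

namespace HasPartials

variable {f g : ℝ × ℝ → ℝ} {a b c d : ℝ} {p : ℝ × ℝ}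

theorem pdx_eq (h : HasPartials f a b p) : pdx f p = a := by
  unfold pdx; rw [HasFDerivAt.fderiv h]; simp

theorem pdy_eq (h : HasPartials f a b p) : pdy f p = b := by
  unfold pdy; rw [HasFDerivAt.fderiv h]; simp

theorem grad_eq (h : HasPartials f a b p) : grad f p = (a, b) :=
  Prod.ext h.pdx_eq h.pdy_eq

theorem of_differentiableAt (h : DifferentiableAt ℝ f p) :
    HasPartials f (pdx f p) (pdy f p) p := by
  unfold HasPartials
  convert h.hasFDerivAt using 1
  ext <;> simp [pdx, pdy]

theorem congr (h : HasPartials f a b p) (ha : a = c) (hb : b = d) : HasPartials f c d p := by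
  subst ha hb; exact h

theorem const (k : ℝ) : HasPartials (fun _ => k) 0 0 p := by
  unfold HasPartials; simpa using hasFDerivAt_const k p

theorem fst : HasPartials (fun q => q.1) 1 0 p := by
  unfold HasPartials; simpa using (hasFDerivAt_fst (𝕜 := ℝ) (p := p))

theorem snd : HasPartials (fun q => q.2) 0 1 p := by
  unfold HasPartials; simpa using (hasFDerivAt_snd (𝕜 := ℝ) (p := p))

theorem add (hf : HasPartials f a b p) (hg : HasPartials g c d p) :
    HasPartials (fun q => f q + g q) (a + c) (b + d) p := by
  refine (HasFDerivAt.add hf hg).congr_fderiv ?_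
  ext <;> simp

theorem sub (hf : HasPartials f a b p) (hg : HasPartials g c d p) :
    HasPartials (fun q => f q - g q) (a - c) (b - d) p := by
  refine (HasFDerivAt.sub hf hg).congr_fderiv ?_
  ext <;> simp

theorem mul (hf : HasPartials f a b p) (hg : HasPartials g c d p) :
    HasPartials (fun q => f q * g q) (a * g p + f p * c) (b * g p + f p * d) p := by
  refine (HasFDerivAt.mul hf hg).congr_fderiv ?_
  ext <;> simp <;> ring

theorem comp (hf : HasPartials f a b p) {F : ℝ → ℝ} {F' : ℝ} (hF : HasDerivAt F F' (f p)) :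
    HasPartials (fun q => F (f q)) (F' * a) (F' * b) p := by
  refine (hF.comp_hasFDerivAt p hf).congr_fderiv ?_
  ext <;> simp

theorem sqrt (hf : HasPartials f a b p) (h : 0 < f p) :
    HasPartials (fun q => √(f q)) (a / (2 * √(f p))) (b / (2 * √(f p))) p :=
  (hf.comp (Real.hasDerivAt_sqrt h.ne')).congr (by ring) (by ring)

theorem div (hf : HasPartials f a b p) (hg : HasPartials g c d p) (h : g p ≠ 0) :
    HasPartials (fun q => f q / g q) ((a * g p - f p * c) / g p ^ 2)
      ((b * g p - f p * d) / g p ^ 2) p := by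
  have := hf.mul (hg.comp (hasDerivAt_inv h))
  simp only [← div_eq_mul_inv] at this
  refine this.congr ?_ ?_ <;> field_simp <;> ring

theorem congr_nhds (h : HasPartials f a b p) (hfg : g =ᶠ[nhds p] f) : HasPartials g a b p :=
  HasFDerivAt.congr_of_eventuallyEq h hfg

end HasPartials

section ContDiff

variable {f : ℝ × ℝ → ℝ} {D : Set (ℝ × ℝ)}

theorem contDiffOn_pdx (hD : IsOpen D) (hf : ContDiffOn ℝ 2 f D) : ContDiffOn ℝ 1 (pdx f) D :=
  (hf.fderiv_of_isOpen hD (m := 1) (by norm_num)).clm_apply contDiffOn_const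

theorem contDiffOn_pdy (hD : IsOpen D) (hf : ContDiffOn ℝ 2 f D) : ContDiffOn ℝ 1 (pdy f) D :=
  (hf.fderiv_of_isOpen hD (m := 1) (by norm_num)).clm_apply contDiffOn_const

theorem hasPartials_of_contDiffOn (hD : IsOpen D) (hf : ContDiffOn ℝ 1 f D) {p : ℝ × ℝ}
    (hp : p ∈ D) : HasPartials f (pdx f p) (pdy f p) p :=
  .of_differentiableAt ((hf.differentiableOn one_ne_zero).differentiableAt (hD.mem_nhds hp))

theorem continuousOn_grad (hD : IsOpen D) (hf : ContDiffOn ℝ 1 f D) : ContinuousOn (grad f) D := by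
  have := hf.continuousOn_fderiv_of_isOpen hD le_rfl
  exact (this.clm_apply continuousOn_const).prodMk (this.clm_apply continuousOn_const)

theorem pdx_pdy_comm {p : ℝ × ℝ} (hf : ContDiffAt ℝ 2 f p) : pdx (pdy f) p = pdy (pdx f) p := by
  have symm : IsSymmSndFDerivAt ℝ f p := hf.isSymmSndFDerivAt (by simp)
  have diff : DifferentiableAt ℝ (fderiv ℝ f) p :=
    (hf.fderiv_right (m := 1) (by norm_num)).differentiableAt one_ne_zero
  have h₁ : pdx (pdy f) p = fderiv ℝ (fderiv ℝ f) p (1, 0) (0, 1) := by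
    unfold pdx pdy
    rw [fderiv_clm_apply diff (differentiableAt_const _)]; simp
  have h₂ : pdy (pdx f) p = fderiv ℝ (fderiv ℝ f) p (0, 1) (1, 0) := by
    unfold pdx pdy
    rw [fderiv_clm_apply diff (differentiableAt_const _)]; simp
  rw [h₁, h₂, symm]

end ContDiff

section divergence

variable {f : ℝ × ℝ → ℝ} {Y Z : ℝ × ℝ → ℝ × ℝ} {D : Set (ℝ × ℝ)} {p : ℝ × ℝ}

theorem divergence_smul (hf : DifferentiableAt ℝ f p) (hZ : DifferentiableAt ℝ Z p) :
    divergence (fun q => f q • Z q) p = f p * divergence Z p + dot (grad f p) (Z p) := by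
  have hf' := HasPartials.of_differentiableAt hf
  have h₁ := (hf'.mul (.of_differentiableAt hZ.fst)).pdx_eq
  have h₂ := (hf'.mul (.of_differentiableAt hZ.snd)).pdy_eq
  simp only [divergence, dot, grad, Prod.smul_fst, Prod.smul_snd, smul_eq_mul, h₁, h₂]
  ring

theorem divergence_sub (hY : DifferentiableAt ℝ Y p) (hZ : DifferentiableAt ℝ Z p) :
    divergence (Y - Z) p = divergence Y p - divergence Z p := by
  have h₁ := ((HasPartials.of_differentiableAt hY.fst).sub (.of_differentiableAt hZ.fst)).pdx_eq
  have h₂ := ((HasPartials.of_differentiableAt hY.snd).sub (.of_differentiableAt hZ.snd)).pdy_eq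
  simp only [divergence, Pi.sub_apply, Prod.fst_sub, Prod.snd_sub, h₁, h₂]
  ring

theorem divergence_congr (h : Y =ᶠ[nhds p] Z) : divergence Y p = divergence Z p := by
  have h₁ : (fun q => (Y q).1) =ᶠ[nhds p] fun q => (Z q).1 := h.fun_comp Prod.fst
  have h₂ : (fun q => (Y q).2) =ᶠ[nhds p] fun q => (Z q).2 := h.fun_comp Prod.snd
  simp only [divergence, pdx, pdy, h₁.fderiv_eq, h₂.fderiv_eq]

theorem integral_fderiv_apply_eq_zero {g : ℝ × ℝ → ℝ} (hg : ContDiff ℝ 1 g)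
    (hc : HasCompactSupport g) (e : ℝ × ℝ) :
    Integrable (fun p => fderiv ℝ g p e) ∧ ∫ p, fderiv ℝ g p e = 0 := by
  have hi : Integrable (fun p => fderiv ℝ g p e) :=
    ((hg.continuous_fderiv one_ne_zero).clm_apply continuous_const).integrable_of_hasCompactSupport
      (hc.fderiv_apply ℝ e)
  refine ⟨hi, ?_⟩
  have := integral_mul_fderiv_eq_neg_fderiv_mul_of_integrable (𝕜 := ℝ) (μ := volume)
    (f := fun _ : ℝ × ℝ => (1 : ℝ)) (g := g) (v := e) (by simp) (by simpa using hi)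
    (by simpa using hg.continuous.integrable_of_hasCompactSupport hc)
    (fun _ _ => differentiableAt_const _) (fun x _ => hg.differentiable one_ne_zero x)
  simpa using this

theorem integral_divergence_eq_zero (hZ : ContDiff ℝ 1 Z) (hc : HasCompactSupport Z) :
    Integrable (divergence Z) ∧ ∫ p, divergence Z p = 0 := by
  obtain ⟨i₁, e₁⟩ := integral_fderiv_apply_eq_zero hZ.fst (hc.comp_left (g := Prod.fst) rfl) (1, 0)
  obtain ⟨i₂, e₂⟩ := integral_fderiv_apply_eq_zero hZ.snd (hc.comp_left (g := Prod.snd) rfl) (0, 1)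
  exact ⟨i₁.add i₂, (integral_add i₁ i₂).trans (by rw [e₁, e₂, add_zero])⟩

theorem contDiff_indicator_of_isCompact {E F : Type*} [NormedAddCommGroup E] [NormedSpace ℝ E]
    [NormedAddCommGroup F] [NormedSpace ℝ F] {n : WithTop ℕ∞} {D K : Set E} (hD : IsOpen D)
    (hK : IsCompact K) (hKD : K ⊆ D) {g : E → F} (hg : ContDiffOn ℝ n g D)
    (h0 : ∀ p ∈ D \ K, g p = 0) :
    ContDiff ℝ n (D.indicator g) ∧ tsupport (D.indicator g) ⊆ K := by
  have hz : ∀ p ∉ K, D.indicator g p = 0 := fun p hp => by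
    by_cases h : p ∈ D
    · rw [indicator_of_mem h, h0 p ⟨h, hp⟩]
    · exact indicator_of_notMem h g
  refine ⟨contDiff_iff_contDiffAt.2 fun p => ?_,
    closure_minimal (fun p hp => not_not.1 fun h => hp (hz p h)) hK.isClosed⟩
  by_cases hp : p ∈ D
  · refine (hg.contDiffAt (hD.mem_nhds hp)).congr_of_eventuallyEq ?_
    filter_upwards [hD.mem_nhds hp] with q hq using indicator_of_mem hq g
  · refine (contDiffAt_const (c := 0)).congr_of_eventuallyEq ?_
    filter_upwards [hK.isClosed.isOpen_compl.mem_nhds fun h => hp (hKD h)] with q hq using hz q hq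

theorem divergence_eq_zero_of_notMem_tsupport (hp : p ∉ tsupport Z) : divergence Z p = 0 := by
  rw [divergence_congr (notMem_tsupport_iff_eventuallyEq.1 hp)]
  simp [divergence, pdx, pdy]

theorem divergence_indicator (hD : IsOpen D) (hp : p ∈ D) :
    divergence (D.indicator Z) p = divergence Z p :=
  divergence_congr (by filter_upwards [hD.mem_nhds hp] with q hq using indicator_of_mem hq Z)

theorem setIntegral_divergence_eq_zero {K : Set (ℝ × ℝ)} (hD : IsOpen D) (hK : IsCompact K)
    (hKD : K ⊆ D) (hZ : ContDiffOn ℝ 1 Z D) (h0 : ∀ p ∈ D \ K, Z p = 0) :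
    IntegrableOn (divergence Z) D ∧ ∫ p in D, divergence Z p = 0 := by
  obtain ⟨hZ', hsupp⟩ := contDiff_indicator_of_isCompact hD hK hKD hZ h0
  obtain ⟨hi, hint⟩ := integral_divergence_eq_zero hZ'
    (hK.of_isClosed_subset (isClosed_tsupport _) hsupp)
  have heq : ∀ p ∈ D, divergence (D.indicator Z) p = divergence Z p := fun _ =>
    divergence_indicator hD
  refine ⟨hi.integrableOn.congr_fun heq hD.measurableSet, ?_⟩
  rw [← setIntegral_congr_fun hD.measurableSet heq, setIntegral_eq_integral_of_forall_compl_eq_zero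
    fun p hp => divergence_eq_zero_of_notMem_tsupport fun h => hp (hKD (hsupp h)), hint]

end divergence

/-! ### The divergence form of the equation -/

/-- The field `X_f = ∇f / W_f`, the horizontal part of the downward unit normal of the graph. -/
def normalizedGrad (f : ℝ × ℝ → ℝ) (p : ℝ × ℝ) : ℝ × ℝ :=
  (pdx f p / Wgraph f p, pdy f p / Wgraph f p)

/-- Twice the mean curvature of the graph of `f`, in divergence form. -/
def twiceMeanCurvature (f : ℝ × ℝ → ℝ) : ℝ × ℝ → ℝ := divergence (normalizedGrad f)

/-- `f` is a `C²` solution on `D` of the equation `div X_f = c`. -/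
structure IsDivFormSolution (c : ℝ) (D : Set (ℝ × ℝ)) (f : ℝ × ℝ → ℝ) : Prop where
  contDiffOn : ContDiffOn ℝ 2 f D
  curvature_eq : ∀ p ∈ D, twiceMeanCurvature f p = c

section normalizedGrad

variable {f b : ℝ × ℝ → ℝ} {D : Set (ℝ × ℝ)} {p : ℝ × ℝ}

theorem Wgraph_pos (f : ℝ × ℝ → ℝ) (p : ℝ × ℝ) : 0 < Wgraph f p :=
  Real.sqrt_pos.2 (by positivity)

theorem Wgraph_sq (f : ℝ × ℝ → ℝ) (p : ℝ × ℝ) :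
    Wgraph f p ^ 2 = 1 + pdx f p ^ 2 + pdy f p ^ 2 :=
  Real.sq_sqrt (by positivity)

theorem dot_normalizedGrad_self_le_one (f : ℝ × ℝ → ℝ) (p : ℝ × ℝ) :
    dot (normalizedGrad f p) (normalizedGrad f p) ≤ 1 := by
  have hW := Wgraph_pos f p
  have h : dot (normalizedGrad f p) (normalizedGrad f p)
      = (pdx f p ^ 2 + pdy f p ^ 2) / Wgraph f p ^ 2 := by
    simp only [dot, normalizedGrad]; field_simp
  rw [h, Wgraph_sq, div_le_one (by positivity)]
  linarith

theorem norm_normalizedGrad_le_one (f : ℝ × ℝ → ℝ) (p : ℝ × ℝ) : ‖normalizedGrad f p‖ ≤ 1 :=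
  norm_le_of_dot_self_le zero_le_one (by simpa using dot_normalizedGrad_self_le_one f p)

theorem contDiffOn_normalizedGrad (hD : IsOpen D) (hf : ContDiffOn ℝ 2 f D) :
    ContDiffOn ℝ 1 (normalizedGrad f) D := by
  have hx := contDiffOn_pdx hD hf
  have hy := contDiffOn_pdy hD hf
  have hW : ContDiffOn ℝ 1 (Wgraph f) D :=
    ((contDiffOn_const.add (hx.pow 2)).add (hy.pow 2)).sqrt fun p _ => by positivity
  exact (hx.div hW fun p _ => (Wgraph_pos f p).ne').prodMk
    (hy.div hW fun p _ => (Wgraph_pos f p).ne')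

theorem normalizedGrad_congr (h : f =ᶠ[nhds p] b) : normalizedGrad f p = normalizedGrad b p := by
  simp only [normalizedGrad, Wgraph, pdx, pdy, h.fderiv_eq]

/-- The map `v ↦ v / √(1 + |v|²)` is monotone, being the gradient of a convex function. -/
theorem dot_normalizedGrad_sub_nonneg (f b : ℝ × ℝ → ℝ) (p : ℝ × ℝ) :
    0 ≤ dot (normalizedGrad f p - normalizedGrad b p) (grad f p - grad b p) := by
  have hw := Wgraph_pos f p
  have hz := Wgraph_pos b p
  have hw2 := Wgraph_sq f p
  have hz2 := Wgraph_sq b p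
  simp only [dot, normalizedGrad, grad, Prod.fst_sub, Prod.snd_sub]
  generalize Wgraph f p = w, Wgraph b p = z, pdx f p = a, pdy f p = b, pdx b p = c,
    pdy b p = d at *
  have cauchy_schwarz : 1 + a * c + b * d ≤ w * z := by
    refine le_of_sq_le_sq ?_ (by positivity)
    rw [mul_pow, hw2, hz2]
    nlinarith [sq_nonneg (a - c), sq_nonneg (b - d), sq_nonneg (a * d - b * c)]
  have factored : (a / w - c / z) * (a - c) + (b / w - d / z) * (b - d)
      = (w + z) * (w * z - (1 + a * c + b * d)) / (w * z) := by
    field_simp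
    linear_combination (-z) * hw2 - w * hz2
  rw [factored]
  exact div_nonneg (mul_nonneg (by positivity) (by linarith)) (by positivity)

end normalizedGrad

section twiceMeanCurvature

variable {f P Q : ℝ × ℝ → ℝ} {Px Py Qx Qy : ℝ} {D : Set (ℝ × ℝ)} {p : ℝ × ℝ}

theorem divergence_normalized (hP : HasPartials P Px Py p) (hQ : HasPartials Q Qx Qy p) :
    divergence (fun q => (P q / √(1 + P q ^ 2 + Q q ^ 2), Q q / √(1 + P q ^ 2 + Q q ^ 2))) p
      = ((1 + Q p ^ 2) * Px - P p * Q p * (Py + Qx) + (1 + P p ^ 2) * Qy)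
        / √(1 + P p ^ 2 + Q p ^ 2) ^ 3 := by
  have hpos : 0 < 1 + P p ^ 2 + Q p ^ 2 := by positivity
  have hW : HasPartials (fun q => √(1 + P q ^ 2 + Q q ^ 2))
      ((P p * Px + Q p * Qx) / √(1 + P p ^ 2 + Q p ^ 2))
      ((P p * Py + Q p * Qy) / √(1 + P p ^ 2 + Q p ^ 2)) p := by
    have h := (((HasPartials.const (p := p) 1).add (hP.comp (hasDerivAt_pow 2 (P p)))).add
      (hQ.comp (hasDerivAt_pow 2 (Q p)))).sqrt hpos
    refine h.congr ?_ ?_ <;> · field_simp; push_cast; ring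
  have hWp : 0 < √(1 + P p ^ 2 + Q p ^ 2) := Real.sqrt_pos.2 hpos
  simp only [divergence]
  rw [(hP.div hW hWp.ne').pdx_eq, (hQ.div hW hWp.ne').pdy_eq]
  have hsq : √(1 + P p ^ 2 + Q p ^ 2) ^ 2 = 1 + P p ^ 2 + Q p ^ 2 := Real.sq_sqrt hpos.le
  set w := √(1 + P p ^ 2 + Q p ^ 2)
  field_simp
  rw [hsq]; ring

theorem twiceMeanCurvature_eq (hf : ∀ᶠ q in nhds p, HasPartials f (P q) (Q q) q)
    (hP : HasPartials P Px Py p) (hQ : HasPartials Q Qx Qy p) :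
    twiceMeanCurvature f p
      = ((1 + Q p ^ 2) * Px - P p * Q p * (Py + Qx) + (1 + P p ^ 2) * Qy)
        / √(1 + P p ^ 2 + Q p ^ 2) ^ 3 := by
  rw [← divergence_normalized hP hQ]
  refine divergence_congr ?_
  filter_upwards [hf] with q hq
  simp only [normalizedGrad, Wgraph, hq.pdx_eq, hq.pdy_eq]

theorem IsCMCSolution.isDivFormSolution {H : ℝ} (hf : IsCMCSolution H D f) (hD : IsOpen D) :
    IsDivFormSolution (2 * H) D f := by
  refine ⟨hf.1, fun p hp => ?_⟩
  have hpartials : ∀ᶠ q in nhds p, HasPartials f (pdx f q) (pdy f q) q := by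
    filter_upwards [hD.mem_nhds hp] with q hq
    exact hasPartials_of_contDiffOn hD (hf.1.of_le one_le_two) hq
  have cube : (1 + pdx f p ^ 2 + pdy f p ^ 2) ^ ((3 : ℝ) / 2) = Wgraph f p ^ 3 := by
    have h0 : 0 ≤ 1 + pdx f p ^ 2 + pdy f p ^ 2 := by positivity
    rw [Wgraph, Real.sqrt_eq_rpow, ← Real.rpow_natCast _ 3, ← Real.rpow_mul h0]
    norm_num
  have equation := hf.2 p hp
  rw [cube] at equation
  rw [twiceMeanCurvature_eq hpartials (hasPartials_of_contDiffOn hD (contDiffOn_pdx hD hf.1) hp)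
    (hasPartials_of_contDiffOn hD (contDiffOn_pdy hD hf.1) hp),
    pdx_pdy_comm (hf.1.contDiffAt (hD.mem_nhds hp)), ← Wgraph,
    div_eq_iff (pow_pos (Wgraph_pos f p) 3).ne', ← equation]
  ring

end twiceMeanCurvature

/-! ### Cutoff functions -/

section cutoff

theorem hasDerivAt_smoothTransition (t : ℝ) :
    HasDerivAt Real.smoothTransition (deriv Real.smoothTransition t) t :=
  ((Real.smoothTransition.contDiff (n := 1)).differentiable one_ne_zero t).hasDerivAt

theorem deriv_smoothTransition_nonneg (t : ℝ) : 0 ≤ deriv Real.smoothTransition t :=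
  Real.smoothTransition.monotone.deriv_nonneg

theorem deriv_smoothTransition_of_one_le {t : ℝ} (ht : 1 ≤ t) :
    deriv Real.smoothTransition t = 0 := by
  refine IsLocalMax.deriv_eq_zero (.of_forall fun s => ?_)
  rw [Real.smoothTransition.one_of_one_le ht]
  exact Real.smoothTransition.le_one s

theorem deriv_smoothTransition_of_nonpos {t : ℝ} (ht : t ≤ 0) :
    deriv Real.smoothTransition t = 0 := by
  refine IsLocalMin.deriv_eq_zero (.of_forall fun s => ?_)
  rw [Real.smoothTransition.zero_of_nonpos ht]
  exact Real.smoothTransition.nonneg s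

theorem continuous_deriv_smoothTransition : Continuous (deriv Real.smoothTransition) :=
  (Real.smoothTransition.contDiff (n := 1)).continuous_deriv le_rfl

theorem exists_deriv_smoothTransition_le : ∃ B, ∀ t, deriv Real.smoothTransition t ≤ B := by
  obtain ⟨B, hB⟩ := (isCompact_Icc (a := (0 : ℝ)) (b := 1)).bddAbove_image
    continuous_deriv_smoothTransition.continuousOn
  have hB0 : 0 ≤ B := (deriv_smoothTransition_nonneg 0).trans (hB ⟨0, by simp, rfl⟩)
  refine ⟨B, fun t => ?_⟩
  rcases le_or_gt t 0 with h | h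
  · rwa [deriv_smoothTransition_of_nonpos h]
  rcases le_or_gt 1 t with h' | h'
  · rwa [deriv_smoothTransition_of_one_le h']
  · exact hB ⟨t, ⟨h.le, h'.le⟩, rfl⟩

/-- Smooth nondecreasing cutoff equal to `0` on `(-∞, e]` and to `1` on `[2e, ∞)`. -/
def cut (e t : ℝ) : ℝ := Real.smoothTransition (t / e - 1)

/-- The derivative of `cut e`. -/
def cut' (e t : ℝ) : ℝ := deriv Real.smoothTransition (t / e - 1) / e

theorem hasDerivAt_cut (e t : ℝ) : HasDerivAt (cut e) (cut' e t) t := by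
  have h : HasDerivAt (fun s : ℝ => s / e - 1) (1 / e) t :=
    ((hasDerivAt_id t).div_const e).sub_const 1
  have := (hasDerivAt_smoothTransition (t / e - 1)).comp t h
  rwa [mul_one_div] at this

theorem contDiff_cut (e : ℝ) : ContDiff ℝ 1 (cut e) :=
  Real.smoothTransition.contDiff.comp ((contDiff_id.div_const e).sub contDiff_const)

theorem continuous_cut' (e : ℝ) : Continuous (cut' e) :=
  (continuous_deriv_smoothTransition.comp (by fun_prop)).div_const e

theorem cut_nonneg (e t : ℝ) : 0 ≤ cut e t := Real.smoothTransition.nonneg _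

theorem cut_le_one (e t : ℝ) : cut e t ≤ 1 := Real.smoothTransition.le_one _

variable {e t : ℝ}

theorem cut'_nonneg (he : 0 < e) (t : ℝ) : 0 ≤ cut' e t :=
  div_nonneg (deriv_smoothTransition_nonneg _) he.le

theorem cut_eq_zero (he : 0 < e) (h : t ≤ e) : cut e t = 0 :=
  Real.smoothTransition.zero_of_nonpos (by rwa [sub_nonpos, div_le_one he])

theorem cut_eq_one (he : 0 < e) (h : 2 * e ≤ t) : cut e t = 1 :=
  Real.smoothTransition.one_of_one_le (by rw [le_sub_iff_add_le, le_div_iff₀ he]; linarith)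

theorem cut'_eq_zero (he : 0 < e) (h : 2 * e ≤ t) : cut' e t = 0 := by
  unfold cut'
  rw [deriv_smoothTransition_of_one_le (by rw [le_sub_iff_add_le, le_div_iff₀ he]; linarith),
    zero_div]

theorem cut'_mul_le {B : ℝ} (he : 0 < e) (hB : ∀ t, deriv Real.smoothTransition t ≤ B)
    (ht : 0 ≤ t) :
    cut' e t * t ≤ if t < 2 * e then 2 * B else 0 := by
  split_ifs with h
  · have hB0 : 0 ≤ B := (deriv_smoothTransition_nonneg 0).trans (hB 0)
    calc cut' e t * t = deriv Real.smoothTransition (t / e - 1) * (t / e) := by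
          unfold cut'; ring
      _ ≤ B * 2 := mul_le_mul (hB _) (by rw [div_le_iff₀ he]; exact h.le) (by positivity) hB0
      _ = 2 * B := mul_comm _ _
  · rw [cut'_eq_zero he (not_lt.1 h), zero_mul]

end cutoff

/-! ### Thin layers along the boundary -/

/-- The part of `D` where `g < 2e`; the slope of `cut e ∘ g` lives there. -/
def layer (D : Set (ℝ × ℝ)) (g : ℝ × ℝ → ℝ) (e : ℝ) : Set (ℝ × ℝ) := D ∩ {p | g p < 2 * e}

section layer

variable {D : Set (ℝ × ℝ)} {g : ℝ × ℝ → ℝ}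

theorem measurableSet_layer (hD : IsOpen D) (hg : ContinuousOn g D) (e : ℝ) :
    MeasurableSet (layer D g e) :=
  (hg.isOpen_inter_preimage hD isOpen_Iio).measurableSet

theorem tendsto_measure_layer (hD : IsOpen D) (hbd : Bornology.IsBounded D)
    (hg : ContinuousOn g D) (hpos : ∀ p ∈ D, 0 < g p) :
    Tendsto (fun e => volume.real (layer D g e)) (nhdsWithin 0 (Ioi 0)) (nhds 0) := by
  have hinter : ⋂ e > (0 : ℝ), layer D g e = ∅ := by
    refine eq_empty_of_forall_notMem fun p hp => ?_
    simp only [mem_iInter, layer] at hp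
    have hpD := (hp 1 one_pos).1
    have : g p < 2 * (g p / 2) := (hp (g p / 2) (half_pos (hpos p hpD))).2
    linarith
  have h := tendsto_measure_biInter_gt (μ := volume) (a := (0 : ℝ)) (s := layer D g)
    (fun e _ => (measurableSet_layer hD hg e).nullMeasurableSet)
    (fun i j _ hij p hp => ⟨hp.1, lt_of_lt_of_le (b := 2 * i) hp.2 (by linarith)⟩)
    ⟨1, one_pos, (hbd.subset inter_subset_left).measure_lt_top.ne⟩
  rw [hinter, measure_empty] at h
  exact (ENNReal.tendsto_toReal ENNReal.zero_ne_top).comp h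

theorem integrableOn_indicator_layer (hD : IsOpen D) (hbd : Bornology.IsBounded D)
    (hg : ContinuousOn g D) (e A : ℝ) :
    IntegrableOn ((layer D g e).indicator fun _ => A) D :=
  (integrableOn_const hbd.measure_lt_top.ne).indicator (measurableSet_layer hD hg e)

theorem setIntegral_indicator_layer (hD : IsOpen D) (hg : ContinuousOn g D) (e A : ℝ) :
    ∫ p in D, (layer D g e).indicator (fun _ => A) p = A * volume.real (layer D g e) := by
  have hsub : layer D g e ⊆ D := inter_subset_left
  rw [setIntegral_indicator (measurableSet_layer hD hg e), inter_eq_right.2 hsub,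
    setIntegral_const, smul_eq_mul, mul_comm]

end layer

/-! ### The comparison principle -/

/-- `ζ` is a nonnegative `C¹` function on `D` which, on the set `N`, vanishes outside a compact
subset of `D`. -/
structure IsCutoffOn (D N : Set (ℝ × ℝ)) (ζ : ℝ × ℝ → ℝ) : Prop where
  contDiffOn : ContDiffOn ℝ 1 ζ D
  nonneg : ∀ p ∈ D, 0 ≤ ζ p
  exists_isCompact : ∃ K ⊆ D, IsCompact K ∧ ∀ p ∈ D ∩ N, p ∉ K → ζ p = 0

/-- `T` is an integrable bound for the flux of `X_f - X_b` through the level sets of `ζ`, in the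
region where `f < b`. -/
structure IsFluxBound (D : Set (ℝ × ℝ)) (f b ζ T : ℝ × ℝ → ℝ) : Prop where
  integrableOn : IntegrableOn T D
  nonneg : ∀ p ∈ D, 0 ≤ T p
  dot_le : ∀ p ∈ D, f p < b p → dot (normalizedGrad f p - normalizedGrad b p) (grad ζ p) ≤ T p

section comparison

variable {D : Set (ℝ × ℝ)} {f b ζ T : ℝ × ℝ → ℝ}

theorem continuousOn_divergence {Z : ℝ × ℝ → ℝ × ℝ} (hD : IsOpen D) (hZ : ContDiffOn ℝ 1 Z D) :
    ContinuousOn (divergence Z) D :=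
  (continuous_fst.comp_continuousOn (continuousOn_grad hD hZ.fst)).add
    (continuous_snd.comp_continuousOn (continuousOn_grad hD hZ.snd))

theorem continuousOn_twiceMeanCurvature (hD : IsOpen D) (hf : ContDiffOn ℝ 2 f D) :
    ContinuousOn (twiceMeanCurvature f) D :=
  continuousOn_divergence hD (contDiffOn_normalizedGrad hD hf)

/-- The field `χ(b - f) ζ (X_f - X_b)` whose divergence is integrated in the comparison
principle; `χ` is a smooth approximation of the indicator function of `(0, ∞)`. -/
def comparisonField (f b ζ : ℝ × ℝ → ℝ) (p : ℝ × ℝ) : ℝ × ℝ :=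
  (Real.smoothTransition (b p - f p) * ζ p) • (normalizedGrad f p - normalizedGrad b p)

theorem contDiffOn_comparisonField (hD : IsOpen D) (hf : ContDiffOn ℝ 2 f D)
    (hb : ContDiffOn ℝ 2 b D) (hζ : ContDiffOn ℝ 1 ζ D) :
    ContDiffOn ℝ 1 (comparisonField f b ζ) D :=
  ((Real.smoothTransition.contDiff.comp_contDiffOn
    ((hb.of_le one_le_two).sub (hf.of_le one_le_two))).mul hζ).smul
    ((contDiffOn_normalizedGrad hD hf).sub (contDiffOn_normalizedGrad hD hb))

theorem curvature_sub_le_of_isFluxBound (hD : IsOpen D) (hf : ContDiffOn ℝ 2 f D)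
    (hb : ContDiffOn ℝ 2 b D) (hζ : ContDiffOn ℝ 1 ζ D) (hζ0 : ∀ p ∈ D, 0 ≤ ζ p)
    (hT : IsFluxBound D f b ζ T) {p : ℝ × ℝ} (hp : p ∈ D) :
    Real.smoothTransition (b p - f p) * ζ p * (twiceMeanCurvature b p - twiceMeanCurvature f p)
      ≤ T p - divergence (comparisonField f b ζ) p := by
  have hfp := hasPartials_of_contDiffOn hD (hf.of_le one_le_two) hp
  have hbp := hasPartials_of_contDiffOn hD (hb.of_le one_le_two) hp
  have hφ := ((hbp.sub hfp).comp (hasDerivAt_smoothTransition (b p - f p))).mul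
    (hasPartials_of_contDiffOn hD hζ hp)
  have hX : ∀ {h : ℝ × ℝ → ℝ}, ContDiffOn ℝ 2 h D → DifferentiableAt ℝ (normalizedGrad h) p :=
    fun hh => ((contDiffOn_normalizedGrad hD hh).differentiableOn one_ne_zero).differentiableAt
      (hD.mem_nhds hp)
  have hdiv : divergence (comparisonField f b ζ) p = _ :=
    divergence_smul (Z := normalizedGrad f - normalizedGrad b) hφ.differentiableAt
      ((hX hf).sub (hX hb))
  rw [divergence_sub (hX hf) (hX hb), hφ.grad_eq] at hdiv
  have hmono : 0 ≤ deriv Real.smoothTransition (b p - f p) * ζ p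
      * dot (normalizedGrad f p - normalizedGrad b p) (grad f p - grad b p) :=
    mul_nonneg (mul_nonneg (deriv_smoothTransition_nonneg _) (hζ0 p hp))
      (dot_normalizedGrad_sub_nonneg f b p)
  have hflux : Real.smoothTransition (b p - f p)
      * dot (normalizedGrad f p - normalizedGrad b p) (grad ζ p) ≤ T p := by
    rcases lt_or_ge (f p) (b p) with hlt | hge
    · exact (mul_le_mul_of_nonneg_left (hT.dot_le p hp hlt) (smoothTransition.nonneg _)).trans
        (mul_le_of_le_one_left (hT.nonneg p hp) (smoothTransition.le_one _))
    · rw [smoothTransition.zero_of_nonpos (sub_nonpos.2 hge), zero_mul]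
      exact hT.nonneg p hp
  rw [hdiv]
  simp only [twiceMeanCurvature, dot, grad, Pi.sub_apply, Prod.fst_sub, Prod.snd_sub]
    at hmono hflux ⊢
  linarith

theorem setIntegral_curvature_sub_le (hD : IsOpen D) (hf : ContDiffOn ℝ 2 f D)
    (hb : ContDiffOn ℝ 2 b D) (hζ : IsCutoffOn D {p | f p < b p} ζ)
    (hT : IsFluxBound D f b ζ T) :
    IntegrableOn (fun p => Real.smoothTransition (b p - f p) * ζ p
        * (twiceMeanCurvature b p - twiceMeanCurvature f p)) D ∧
      ∫ p in D, Real.smoothTransition (b p - f p) * ζ p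
        * (twiceMeanCurvature b p - twiceMeanCurvature f p) ≤ ∫ p in D, T p := by
  obtain ⟨K, hKD, hK, hout⟩ := hζ.exists_isCompact
  have hzero : ∀ p ∈ D \ K, Real.smoothTransition (b p - f p) * ζ p = 0 := fun p hp => by
    rcases lt_or_ge (f p) (b p) with hlt | hge
    · rw [hout p ⟨hp.1, hlt⟩ hp.2, mul_zero]
    · rw [smoothTransition.zero_of_nonpos (sub_nonpos.2 hge), zero_mul]
  have hcont : ContinuousOn (fun p => Real.smoothTransition (b p - f p) * ζ p
      * (twiceMeanCurvature b p - twiceMeanCurvature f p)) D :=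
    ((smoothTransition.continuous.comp_continuousOn (hb.continuousOn.sub hf.continuousOn)).mul
      hζ.contDiffOn.continuousOn).mul ((continuousOn_twiceMeanCurvature hD hb).sub
      (continuousOn_twiceMeanCurvature hD hf))
  have hint : IntegrableOn _ D :=
    ((hcont.mono hKD).integrableOn_compact (μ := volume) hK).of_forall_sdiff_eq_zero
      hD.measurableSet fun p hp => by rw [hzero p hp, zero_mul]
  refine ⟨hint, ?_⟩
  obtain ⟨hdiv, hdiv0⟩ := setIntegral_divergence_eq_zero hD hK hKD
    (contDiffOn_comparisonField hD hf hb hζ.contDiffOn)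
    fun p hp => by rw [comparisonField, hzero p hp, zero_smul]
  calc _ ≤ ∫ p in D, (T p - divergence (comparisonField f b ζ) p) :=
        setIntegral_mono_on hint (hT.integrableOn.sub hdiv) hD.measurableSet fun p hp =>
          curvature_sub_le_of_isFluxBound hD hf hb hζ.contDiffOn hζ.nonneg hT hp
    _ = ∫ p in D, T p := by rw [integral_sub hT.integrableOn hdiv, hdiv0, sub_zero]

/-- If `b > f` at a point, then the integrand of `setIntegral_curvature_sub_le` is bounded below
on a ball independent of `i`, which is incompatible with `∫ T i → 0`. -/
theorem le_of_curvature_lt {ι : Type*} {l : Filter ι} [l.NeBot] (hD : IsOpen D)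
    (hf : ContDiffOn ℝ 2 f D) (hb : ContDiffOn ℝ 2 b D)
    (hlt : ∀ p ∈ D, twiceMeanCurvature f p < twiceMeanCurvature b p) {ζ T : ι → ℝ × ℝ → ℝ}
    (hζ : ∀ᶠ i in l, IsCutoffOn D {p | f p < b p} (ζ i))
    (hζ1 : ∀ Q ∈ D, ∀ᶠ x : ι × (ℝ × ℝ) in l ×ˢ nhds Q, ζ x.1 x.2 = 1)
    (hT : ∀ᶠ i in l, IsFluxBound D f b (ζ i) (T i))
    (hT0 : Tendsto (fun i => ∫ p in D, T i p) l (nhds 0)) :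
    ∀ p ∈ D, b p ≤ f p := by
  intro Q hQ
  by_contra! hQlt
  let Ψ : ℝ × ℝ → ℝ := fun p =>
    Real.smoothTransition (b p - f p) * (twiceMeanCurvature b p - twiceMeanCurvature f p)
  have hΨ : ContinuousAt Ψ Q :=
    ((smoothTransition.continuous.comp_continuousOn (hb.continuousOn.sub hf.continuousOn)).mul
      ((continuousOn_twiceMeanCurvature hD hb).sub (continuousOn_twiceMeanCurvature hD hf))
      ).continuousAt (hD.mem_nhds hQ)
  have hΨQ : 0 < Ψ Q :=
    mul_pos (smoothTransition.pos_of_pos (sub_pos.2 hQlt)) (sub_pos.2 (hlt Q hQ))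
  obtain ⟨pa, hpa, pb, hpb, hone⟩ := Filter.eventually_prod_iff.1 (hζ1 Q hQ)
  obtain ⟨ρ, hρ, hball⟩ := Metric.eventually_nhds_iff_ball.1
    (((hD.eventually_mem hQ).and (hΨ.eventually (lt_mem_nhds (half_lt_self hΨQ)))).and hpb)
  have lower : ∀ᶠ i in l, Ψ Q / 2 * volume.real (Metric.ball Q ρ) ≤ ∫ p in D, T i p := by
    filter_upwards [hζ, hT, hpa] with i hζi hTi hi
    obtain ⟨hint, hle⟩ := setIntegral_curvature_sub_le hD hf hb hζi hTi
    have hsub : Metric.ball Q ρ ⊆ D := fun p hp => (hball p hp).1.1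
    calc Ψ Q / 2 * volume.real (Metric.ball Q ρ) = ∫ _ in Metric.ball Q ρ, Ψ Q / 2 := by
          rw [setIntegral_const, smul_eq_mul, mul_comm]
      _ ≤ ∫ p in Metric.ball Q ρ, _ :=
          setIntegral_mono_on (integrableOn_const measure_ball_lt_top.ne) (hint.mono_set hsub)
            measurableSet_ball fun p hp => by
              rw [hone hi (hball p hp).2, mul_one]
              exact (hball p hp).1.2.le
      _ ≤ ∫ p in D, _ := setIntegral_mono_set hint
          ((ae_restrict_mem hD.measurableSet).mono fun p hp =>
            mul_nonneg (mul_nonneg (smoothTransition.nonneg _) (hζi.nonneg p hp))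
              (sub_nonneg.2 (hlt p hp).le)) hsub.eventuallyLE
      _ ≤ _ := hle
  have hvol : 0 < volume.real (Metric.ball Q ρ) :=
    ENNReal.toReal_pos (Metric.measure_ball_pos volume Q hρ).ne' measure_ball_lt_top.ne
  exact (mul_pos (half_pos hΨQ) hvol).not_ge (ge_of_tendsto hT0 lower)

end comparison

/-! ### The divergence theorem to the right of a graph -/

section halfPlane

variable {f : ℝ × ℝ → ℝ} {Z : ℝ × ℝ → ℝ × ℝ}

theorem setIntegral_halfPlane_pdx (hf : ContDiff ℝ 1 f) (hc : HasCompactSupport f) :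
    ∫ p in Ioi 0 ×ˢ univ, pdx f p = -∫ y, f (0, y) := by
  have hint : IntegrableOn (pdx f) (Ioi 0 ×ˢ univ) :=
    (integral_fderiv_apply_eq_zero hf hc _).1.integrableOn
  rw [Measure.volume_eq_prod, ← setIntegral_prod_swap,
    setIntegral_prod (fun z => pdx f z.swap) hint.swap, setIntegral_univ, ← integral_neg]
  refine integral_congr_ae (Eventually.of_forall fun y => ?_)
  have hline : ContDiff ℝ 1 fun x => f (x, y) := hf.comp (contDiff_id.prodMk contDiff_const)
  have hsupp : HasCompactSupport fun x => f (x, y) :=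
    .intro (hc.isCompact.image continuous_fst) fun x hx =>
      image_eq_zero_of_notMem_tsupport fun h => hx ⟨_, h, rfl⟩
  dsimp only
  rw [← hsupp.integral_Ioi_deriv_eq hline 0]
  refine setIntegral_congr_fun measurableSet_Ioi fun x _ => ?_
  exact ((hf.differentiable one_ne_zero (x, y)).hasFDerivAt.comp_hasDerivAt x
    ((hasDerivAt_id x).prodMk (hasDerivAt_const x y))).deriv.symm

theorem setIntegral_halfPlane_pdy (hf : ContDiff ℝ 1 f) (hc : HasCompactSupport f) :
    ∫ p in Ioi 0 ×ˢ univ, pdy f p = 0 := by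
  have hint : IntegrableOn (pdy f) (Ioi 0 ×ˢ univ) :=
    (integral_fderiv_apply_eq_zero hf hc _).1.integrableOn
  rw [Measure.volume_eq_prod, setIntegral_prod _ hint]
  refine integral_eq_zero_of_ae (Eventually.of_forall fun x => ?_)
  have hline : Continuous fun y => pdy f (x, y) :=
    ((hf.continuous_fderiv one_ne_zero).clm_apply continuous_const).comp (by fun_prop)
  have hsupp : ∀ {g : ℝ × ℝ → ℝ}, tsupport g ⊆ tsupport f → HasCompactSupport fun y => g (x, y) :=
    fun hg => .intro (hc.isCompact.image continuous_snd) fun y hy =>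
      image_eq_zero_of_notMem_tsupport fun h => hy ⟨_, hg h, rfl⟩
  simp only [setIntegral_univ]
  exact integral_eq_zero_of_hasDerivAt_of_integrable
    (fun y => (hf.differentiable one_ne_zero (x, y)).hasFDerivAt.comp_hasDerivAt y
      ((hasDerivAt_const y x).prodMk (hasDerivAt_id y)))
    (hline.integrable_of_hasCompactSupport (hsupp (tsupport_fderiv_apply_subset ℝ _)))
    ((hf.continuous.comp (by fun_prop)).integrable_of_hasCompactSupport (hsupp subset_rfl))

theorem setIntegral_halfPlane_divergence (hZ : ContDiff ℝ 1 Z) (hc : HasCompactSupport Z) :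
    ∫ p in Ioi 0 ×ˢ univ, divergence Z p = -∫ y, (Z (0, y)).1 := by
  have h₁ := hc.comp_left (g := Prod.fst) rfl
  have h₂ := hc.comp_left (g := Prod.snd) rfl
  refine (integral_add (integral_fderiv_apply_eq_zero hZ.fst h₁ (1, 0)).1.integrableOn
    (integral_fderiv_apply_eq_zero hZ.snd h₂ (0, 1)).1.integrableOn).trans ?_
  rw [← add_zero (-∫ y, (Z (0, y)).1)]
  exact congr_arg₂ _ (setIntegral_halfPlane_pdx hZ.fst h₁) (setIntegral_halfPlane_pdy hZ.snd h₂)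

end halfPlane

section graph

variable {γ : ℝ → ℝ} {Z : ℝ × ℝ → ℝ × ℝ}

/-- The homeomorphism `(s, y) ↦ (s + γ y, y)`, which straightens the graph of `γ` over the
second coordinate. -/
def shear (hγ : Continuous γ) : ℝ × ℝ ≃ₜ ℝ × ℝ where
  toFun p := (p.1 + γ p.2, p.2)
  invFun p := (p.1 - γ p.2, p.2)
  left_inv p := by simp
  right_inv p := by simp

theorem measurePreserving_shear (hγ : Continuous γ) :
    MeasurePreserving (shear hγ) volume volume := by
  have hskew : MeasurePreserving (fun p : ℝ × ℝ => (p.1, p.2 + γ p.1)) :=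
    (MeasurePreserving.id volume).skew_product (g := fun y s => s + γ y) (by fun_prop)
      (Eventually.of_forall fun y => (measurePreserving_add_right volume (γ y)).map_eq)
  exact Measure.measurePreserving_swap.comp (hskew.comp Measure.measurePreserving_swap)

/-- The vector field `Z` in the coordinates of `shear`, which have Jacobian determinant `1`. -/
def straighten (hγ : Continuous γ) (Z : ℝ × ℝ → ℝ × ℝ) (p : ℝ × ℝ) : ℝ × ℝ :=
  ((Z (shear hγ p)).1 - deriv γ p.2 * (Z (shear hγ p)).2, (Z (shear hγ p)).2)

theorem contDiff_straighten (hγ : ContDiff ℝ 2 γ) (hZ : ContDiff ℝ 1 Z) :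
    ContDiff ℝ 1 (straighten hγ.continuous Z) := by
  have hS : ContDiff ℝ 1 (shear hγ.continuous) :=
    (contDiff_fst.add ((hγ.of_le (by norm_num)).comp contDiff_snd)).prodMk contDiff_snd
  have hγ' : ContDiff ℝ 1 (deriv γ) := ContDiff.deriv' hγ
  exact ((hZ.comp hS).fst.sub ((hγ'.comp contDiff_snd).mul (hZ.comp hS).snd)).prodMk
    (hZ.comp hS).snd

theorem hasCompactSupport_straighten (hγ : Continuous γ) (hc : HasCompactSupport Z) :
    HasCompactSupport (straighten hγ Z) :=
  (hc.comp_homeomorph (shear hγ)).mono fun p hp h => hp (by simp_all [straighten])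

theorem HasPartials.comp_shear {f : ℝ × ℝ → ℝ} (hγ : ContDiff ℝ 1 γ) {a b : ℝ} {p : ℝ × ℝ}
    (hf : HasPartials f a b (shear hγ.continuous p)) :
    HasPartials (fun q => f (shear hγ.continuous q)) a (a * deriv γ p.2 + b) p := by
  have hfst := HasPartials.fst.add
    (HasPartials.snd.comp (hγ.differentiable one_ne_zero p.2).hasDerivAt)
  refine (HasFDerivAt.comp (f := fun q : ℝ × ℝ => (q.1 + γ q.2, q.2)) p hf
    (HasFDerivAt.prodMk hfst HasPartials.snd)).congr_fderiv ?_
  ext <;> simp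

theorem divergence_straighten (hγ : ContDiff ℝ 2 γ) (hZ : ContDiff ℝ 1 Z) (p : ℝ × ℝ) :
    divergence (straighten hγ.continuous Z) p = divergence Z (shear hγ.continuous p) := by
  have hγ₁ : ContDiff ℝ 1 γ := hγ.of_le (by norm_num)
  have hγ' : HasDerivAt (deriv γ) _ p.2 :=
    ((ContDiff.deriv' hγ : ContDiff ℝ 1 _).differentiable one_ne_zero p.2).hasDerivAt
  have h₁ := HasPartials.comp_shear (p := p) hγ₁
    (HasPartials.of_differentiableAt (hZ.fst.differentiable one_ne_zero _))
  have h₂ := HasPartials.comp_shear (p := p) hγ₁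
    (HasPartials.of_differentiableAt (hZ.snd.differentiable one_ne_zero _))
  have hsum := congr_arg₂ (· + ·) (h₁.sub ((HasPartials.snd.comp hγ').mul h₂)).pdx_eq h₂.pdy_eq
  refine hsum.trans ?_
  simp only [divergence]
  ring

theorem setIntegral_divergence_right_of_graph (hγ : ContDiff ℝ 2 γ) (hZ : ContDiff ℝ 1 Z)
    (hc : HasCompactSupport Z) :
    ∫ p in {p | γ p.2 < p.1}, divergence Z p
      = ∫ y, (deriv γ y * (Z (γ y, y)).2 - (Z (γ y, y)).1) := by
  have hpre : shear hγ.continuous ⁻¹' {p | γ p.2 < p.1} = Ioi 0 ×ˢ univ := by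
    ext p; simp [shear]
  rw [← (measurePreserving_shear hγ.continuous).setIntegral_preimage_emb
    (shear hγ.continuous).measurableEmbedding, hpre]
  simp_rw [← divergence_straighten hγ hZ]
  rw [setIntegral_halfPlane_divergence (contDiff_straighten hγ hZ)
    (hasCompactSupport_straighten _ hc), ← integral_neg]
  simp [straighten, shear]

end graph

/-! ### Limits of fluxes -/

section flux

variable {φ : ℝ × ℝ → ℝ} {B c : ℝ} {D E : Set (ℝ × ℝ)}

/-- The divergence of `φ • U` when `U` has divergence `c`. -/
def fluxIntegrand (c : ℝ) (φ : ℝ × ℝ → ℝ) (U : ℝ × ℝ → ℝ × ℝ) (p : ℝ × ℝ) : ℝ :=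
  dot (grad φ p) (U p) + φ p * c

/-- A bound for `fluxIntegrand c φ U` when `‖U‖ ≤ B`. -/
def fluxBound (c B : ℝ) (φ : ℝ × ℝ → ℝ) (p : ℝ × ℝ) : ℝ := 2 * ‖grad φ p‖ * B + |φ p * c|

theorem abs_fluxIntegrand_le {U : ℝ × ℝ → ℝ × ℝ} {p : ℝ × ℝ} (h : ‖U p‖ ≤ B) :
    |fluxIntegrand c φ U p| ≤ fluxBound c B φ p :=
  (abs_add_le _ _).trans (add_le_add_left ((abs_dot_le _ _).trans (by gcongr)) _)

theorem continuous_fluxBound (hφ : ContDiff ℝ 1 φ) : Continuous (fluxBound c B φ) := by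
  have hgrad : Continuous (grad φ) :=
    continuousOn_univ.1 (continuousOn_grad isOpen_univ hφ.contDiffOn)
  have hφ' := hφ.continuous
  unfold fluxBound
  fun_prop

theorem hasCompactSupport_fluxBound (hc : HasCompactSupport φ) :
    HasCompactSupport (fluxBound c B φ) := by
  refine hc.mono' fun p hp => ?_
  contrapose! hp
  have hzero : φ =ᶠ[nhds p] fun _ => 0 := notMem_tsupport_iff_eventuallyEq.1 hp
  have hgrad : grad φ p = (0, 0) := ((HasPartials.const 0).congr_nhds hzero).grad_eq
  simp [fluxBound, hgrad, hzero.eq_of_nhds]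

theorem integrable_fluxBound (hφ : ContDiff ℝ 1 φ) (hc : HasCompactSupport φ) :
    Integrable (fluxBound c B φ) :=
  (continuous_fluxBound hφ).integrable_of_hasCompactSupport (hasCompactSupport_fluxBound hc)

theorem exists_fluxIntegrand_le (hφ : ContDiff ℝ 1 φ) (hc : HasCompactSupport φ) :
    ∃ A, ∀ (U : ℝ × ℝ → ℝ × ℝ) p, ‖U p‖ ≤ B → fluxIntegrand c φ U p ≤ A := by
  obtain ⟨A, hA⟩ := (continuous_fluxBound hφ).bounded_above_of_compact_support
    (hasCompactSupport_fluxBound (c := c) (B := B) hc)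
  exact ⟨A, fun U p h => (le_abs_self _).trans ((abs_fluxIntegrand_le h).trans
    ((le_abs_self _).trans (hA p)))⟩

theorem integrableOn_fluxIntegrand (hφ : ContDiff ℝ 1 φ) (hc : HasCompactSupport φ)
    {U : ℝ × ℝ → ℝ × ℝ} (hD : MeasurableSet D) (hU : ContinuousOn U D) (hB : ∀ p ∈ D, ‖U p‖ ≤ B) :
    IntegrableOn (fluxIntegrand c φ U) D := by
  have hgrad : ContinuousOn (grad φ) D :=
    (continuousOn_grad isOpen_univ hφ.contDiffOn).mono (subset_univ D)
  have hφ' := hφ.continuous.continuousOn (s := D)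
  refine (integrable_fluxBound hφ hc).integrableOn.mono' (ContinuousOn.aestronglyMeasurable ?_ hD)
    ((ae_restrict_iff' hD).2 (Eventually.of_forall fun p hp => abs_fluxIntegrand_le (hB p hp)))
  exact ((hgrad.fst.mul hU.fst).add (hgrad.snd.mul hU.snd)).add (hφ'.mul continuousOn_const)

variable {γ : ℝ → ℝ}

theorem contDiff_indicator_smul (hφ : ContDiff ℝ 1 φ) (hc : HasCompactSupport φ) (hE : IsOpen E)
    (hφE : tsupport φ ⊆ E) {V : ℝ × ℝ → ℝ × ℝ} (hV : ContDiffOn ℝ 1 V E) :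
    ContDiff ℝ 1 (E.indicator fun q => φ q • V q) ∧
      tsupport (E.indicator fun q => φ q • V q) ⊆ tsupport φ :=
  contDiff_indicator_of_isCompact hE hc hφE (hφ.contDiffOn.smul hV) fun p hp => by
    rw [image_eq_zero_of_notMem_tsupport hp.2, zero_smul]

theorem setIntegral_fluxIntegrand_eq (hγ : ContDiff ℝ 2 γ) (hφ : ContDiff ℝ 1 φ)
    (hc : HasCompactSupport φ) (hE : IsOpen E) (hφE : tsupport φ ⊆ E) {V : ℝ × ℝ → ℝ × ℝ}
    (hV : ContDiffOn ℝ 1 V E) (hdiv : ∀ p ∈ E, divergence V p = c) :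
    ∫ p in E ∩ {p | γ p.2 < p.1}, fluxIntegrand c φ V p
      = ∫ y, (deriv γ y * (E.indicator (fun q => φ q • V q) (γ y, y)).2
          - (E.indicator (fun q => φ q • V q) (γ y, y)).1) := by
  obtain ⟨hZ, hsupp⟩ := contDiff_indicator_smul hφ hc hE hφE hV
  have hmeas : MeasurableSet {p : ℝ × ℝ | γ p.2 < p.1} :=
    (isOpen_lt (hγ.continuous.comp continuous_snd) continuous_fst).measurableSet
  have hdivZ : ∀ p ∈ E ∩ {p | γ p.2 < p.1}, fluxIntegrand c φ V p
      = divergence (E.indicator fun q => φ q • V q) p := fun p hp => by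
    rw [divergence_indicator hE hp.1, divergence_smul (hφ.differentiable one_ne_zero p)
      ((hV.differentiableOn one_ne_zero).differentiableAt (hE.mem_nhds hp.1)), hdiv p hp.1,
      fluxIntegrand, add_comm]
  rw [← setIntegral_divergence_right_of_graph hγ hZ
      (hc.of_isClosed_subset (isClosed_tsupport _) hsupp),
    setIntegral_congr_fun (hE.measurableSet.inter hmeas) hdivZ]
  exact (setIntegral_eq_of_subset_of_forall_sdiff_eq_zero hmeas inter_subset_right fun p hp =>
    divergence_eq_zero_of_notMem_tsupport fun h => hp.2 ⟨hφE (hsupp h), hp.1⟩).symm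

theorem tendsto_integral_graph_zero (hγ : ContDiff ℝ 2 γ) (hφ : ContDiff ℝ 1 φ)
    (hc : HasCompactSupport φ) (hE : IsOpen E) (hφE : tsupport φ ⊆ E) {V : ℕ → ℝ × ℝ → ℝ × ℝ}
    (hV : ∀ n, ContDiffOn ℝ 1 (V n) E) (hB : ∀ n, ∀ p ∈ E, ‖V n p‖ ≤ B)
    (hlim : ∀ p ∈ E, p.1 = γ p.2 → Tendsto (fun n => V n p) atTop (nhds 0)) :
    Tendsto (fun n => ∫ y, (deriv γ y * (E.indicator (fun q => φ q • V n q) (γ y, y)).2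
      - (E.indicator (fun q => φ q • V n q) (γ y, y)).1)) atTop (nhds 0) := by
  set Z : ℕ → ℝ × ℝ → ℝ × ℝ := fun n => E.indicator fun q => φ q • V n q
  have hγ' : Continuous (deriv γ) := hγ.continuous_deriv (by norm_num)
  have hgraph : Continuous fun y => (γ y, y) := hγ.continuous.prodMk continuous_id
  have : Continuous fun y => φ (γ y, y) := hφ.continuous.comp hgraph
  have hZle : ∀ n p, ‖Z n p‖ ≤ |φ p| * |B| := fun n p => by
    by_cases hp : p ∈ E
    · simp only [Z, indicator_of_mem hp, norm_smul, Real.norm_eq_abs]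
      gcongr
      exact (hB n p hp).trans (le_abs_self B)
    · simp only [Z, indicator_of_notMem hp, norm_zero]
      positivity
  rw [← integral_zero ℝ ℝ (μ := volume)]
  refine tendsto_integral_of_dominated_convergence
    (fun y => (|deriv γ y| + 1) * (|φ (γ y, y)| * |B|)) (fun n => ?_) ?_
    (fun n => Eventually.of_forall fun y => ?_) (Eventually.of_forall fun y => ?_)
  · have hZ : Continuous fun y => Z n (γ y, y) :=
      (contDiff_indicator_smul hφ hc hE hφE (hV n)).1.continuous.comp hgraph
    exact ((hγ'.mul hZ.snd).sub hZ.fst).aestronglyMeasurable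
  · refine Continuous.integrable_of_hasCompactSupport (by fun_prop)
      (.intro (hc.isCompact.image continuous_snd) fun y hy => ?_)
    rw [image_eq_zero_of_notMem_tsupport fun h => hy ⟨_, h, rfl⟩]
    simp
  · have h₁ := (norm_fst_le (Z n (γ y, y))).trans (hZle n _)
    have h₂ := (norm_snd_le (Z n (γ y, y))).trans (hZle n _)
    rw [add_mul, one_mul]
    refine (norm_sub_le _ _).trans (add_le_add ?_ h₁)
    rw [norm_mul]
    exact mul_le_mul_of_nonneg_left h₂ (abs_nonneg _)
  · have hZlim : Tendsto (fun n => Z n (γ y, y)) atTop (nhds 0) := by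
      by_cases hp : (γ y, y) ∈ E
      · simp only [Z, indicator_of_mem hp]
        simpa only [smul_zero] using (hlim _ hp rfl).const_smul (φ (γ y, y))
      · simp only [Z, indicator_of_notMem hp, tendsto_const_nhds]
    simpa using (hZlim.snd_nhds.const_mul (deriv γ y)).sub hZlim.fst_nhds

theorem setIntegral_fluxIntegrand_eq_zero_of_tendsto (hγ : ContDiff ℝ 2 γ) (hφ : ContDiff ℝ 1 φ)
    (hc : HasCompactSupport φ) (hE : IsOpen E) (hφE : tsupport φ ⊆ E) {V : ℕ → ℝ × ℝ → ℝ × ℝ}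
    {U : ℝ × ℝ → ℝ × ℝ} (hV : ∀ n, ContDiffOn ℝ 1 (V n) E)
    (hdiv : ∀ n, ∀ p ∈ E, divergence (V n) p = c) (hB : ∀ n, ∀ p ∈ E, ‖V n p‖ ≤ B)
    (hlim : ∀ p ∈ E, γ p.2 < p.1 → Tendsto (fun n => V n p) atTop (nhds (U p)))
    (hlim₀ : ∀ p ∈ E, p.1 = γ p.2 → Tendsto (fun n => V n p) atTop (nhds 0)) :
    ∫ p in E ∩ {p | γ p.2 < p.1}, fluxIntegrand c φ U p = 0 := by
  have hmeas : MeasurableSet (E ∩ {p : ℝ × ℝ | γ p.2 < p.1}) := (hE.inter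
    (isOpen_lt (hγ.continuous.comp continuous_snd) continuous_fst)).measurableSet
  have hU : Tendsto (fun n => ∫ p in E ∩ {p | γ p.2 < p.1}, fluxIntegrand c φ (V n) p) atTop
      (nhds (∫ p in E ∩ {p | γ p.2 < p.1}, fluxIntegrand c φ U p)) := by
    refine tendsto_integral_of_dominated_convergence _
      (fun n => (integrableOn_fluxIntegrand hφ hc hmeas ((hV n).continuousOn.mono inter_subset_left)
        fun p hp => hB n p hp.1).1) (integrable_fluxBound hφ hc).integrableOn
      (fun n => (ae_restrict_iff' hmeas).2 (Eventually.of_forall fun p hp =>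
        abs_fluxIntegrand_le (hB n p hp.1)))
      ((ae_restrict_iff' hmeas).2 (Eventually.of_forall fun p hp => ?_))
    have h := hlim p hp.1 hp.2
    exact ((h.fst_nhds.const_mul _).add (h.snd_nhds.const_mul _)).add_const _
  simp only [fun n => setIntegral_fluxIntegrand_eq hγ hφ hc hE hφE (hV n) (hdiv n)] at hU
  exact tendsto_nhds_unique hU (tendsto_integral_graph_zero hγ hφ hc hE hφE hV hB hlim₀)

end flux

/-! ### The disk and the arc -/

/-- The open disk of radius `r` about the origin. -/
def disk (r : ℝ) : Set (ℝ × ℝ) := {p | enorm2 p < r}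

/-- The part of `disk r` inside the circle of radius `R` about `(R, 0)`. -/
def side (R r : ℝ) : Set (ℝ × ℝ) := {p | enorm2 p < r ∧ enorm2 (p - (R, 0)) < R}

/-- The arc in which the circle of radius `R` about `(R, 0)` meets `disk r`. -/
def arc (R r : ℝ) : Set (ℝ × ℝ) := {p | enorm2 p < r ∧ enorm2 (p - (R, 0)) = R}

/-- The power of `p` with respect to the circle of radius `R` about `(R, 0)`, with the sign chosen
to be positive inside. -/
def power (R : ℝ) (p : ℝ × ℝ) : ℝ := R ^ 2 - ((p.1 - R) ^ 2 + p.2 ^ 2)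

/-- The linear field that is the outward unit normal of the circle of radius `R` about `(R, 0)` at
the points of that circle. -/
def outwardNormal (R : ℝ) (p : ℝ × ℝ) : ℝ × ℝ := ((p.1 - R) / R, p.2 / R)

section geometry

variable {R r : ℝ} {p : ℝ × ℝ}

theorem continuous_enorm2 : Continuous enorm2 := by unfold enorm2; fun_prop

theorem enorm2_sq (p : ℝ × ℝ) : enorm2 p ^ 2 = p.1 ^ 2 + p.2 ^ 2 := Real.sq_sqrt (by positivity)

theorem enorm2_nonneg (p : ℝ × ℝ) : 0 ≤ enorm2 p := Real.sqrt_nonneg _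

theorem norm_le_enorm2 (p : ℝ × ℝ) : ‖p‖ ≤ enorm2 p :=
  norm_le_of_dot_self_le (enorm2_nonneg p) (by rw [enorm2_sq, dot, sq, sq])

theorem mem_disk_iff (hr : 0 < r) : p ∈ disk r ↔ p.1 ^ 2 + p.2 ^ 2 < r ^ 2 :=
  Real.sqrt_lt' hr

theorem mem_side_iff (hR : 0 < R) : p ∈ side R r ↔ p ∈ disk r ∧ 0 < power R p := by
  refine and_congr_right fun _ => (Real.sqrt_lt' hR).trans ?_
  simp [power]

theorem mem_arc_iff (hR : 0 < R) : p ∈ arc R r ↔ p ∈ disk r ∧ power R p = 0 := by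
  refine and_congr_right fun _ => ?_
  rw [enorm2, Real.sqrt_eq_iff_eq_sq (by positivity) hR.le, power, sub_eq_zero, eq_comm]
  simp

theorem isOpen_disk : IsOpen (disk r) := isOpen_lt continuous_enorm2 continuous_const

theorem isOpen_side : IsOpen (side R r) :=
  isOpen_disk.inter (isOpen_lt (continuous_enorm2.comp (by fun_prop)) continuous_const)

theorem side_subset_disk : side R r ⊆ disk r := fun _ hp => hp.1

theorem isBounded_side : Bornology.IsBounded (side R r) :=
  Metric.isBounded_ball.subset fun p hp =>
    mem_ball_zero_iff.2 ((norm_le_enorm2 p).trans_lt (side_subset_disk hp))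

theorem contDiff_power {n : WithTop ℕ∞} : ContDiff ℝ n (power R) := by unfold power; fun_prop

theorem continuous_power : Continuous (power R) := (contDiff_power (n := 0)).continuous

theorem hasPartials_power : HasPartials (power R) (-2 * (p.1 - R)) (-2 * p.2) p := by
  have h := (HasPartials.const (p := p) (R ^ 2)).sub
    (((HasPartials.fst.sub (.const R)).comp (hasDerivAt_pow 2 (p.1 - R))).add
      ((HasPartials.snd (p := p)).comp (hasDerivAt_pow 2 p.2)))
  refine h.congr ?_ ?_ <;> · push_cast; ring

theorem grad_power (hR : R ≠ 0) : grad (power R) p = (-2 * R) • outwardNormal R p := by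
  rw [hasPartials_power.grad_eq, outwardNormal, Prod.smul_mk, smul_eq_mul, smul_eq_mul]
  congr 1 <;> field_simp

theorem contDiff_outwardNormal {n : WithTop ℕ∞} : ContDiff ℝ n (outwardNormal R) := by
  unfold outwardNormal; fun_prop

theorem divergence_outwardNormal : divergence (outwardNormal R) p = 2 / R := by
  have h₁ : HasPartials (fun q : ℝ × ℝ => (q.1 - R) / R) (1 / R) 0 p :=
    ((HasPartials.fst.sub (.const R)).comp ((hasDerivAt_id _).div_const R)).congr
      (by ring) (by ring)
  have h₂ : HasPartials (fun q : ℝ × ℝ => q.2 / R) 0 (1 / R) p :=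
    (HasPartials.snd.comp ((hasDerivAt_id _).div_const R)).congr (by ring) (by ring)
  simp only [divergence, outwardNormal, h₁.pdx_eq, h₂.pdy_eq]
  ring

theorem dot_outwardNormal_self (hR : R ≠ 0) :
    dot (outwardNormal R p) (outwardNormal R p) = 1 - power R p / R ^ 2 := by
  simp only [dot, outwardNormal, power]; field_simp; ring

theorem dot_outwardNormal_self_le_one (hR : 0 < R) (hp : p ∈ side R r) :
    dot (outwardNormal R p) (outwardNormal R p) ≤ 1 := by
  rw [dot_outwardNormal_self hR.ne']
  linarith [div_nonneg ((mem_side_iff hR).1 hp).2.le (sq_nonneg R)]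

theorem norm_outwardNormal_le (hrR : r < R) (hp : p ∈ disk r) : ‖outwardNormal R p‖ ≤ 2 := by
  have hr : 0 < r := (enorm2_nonneg p).trans_lt hp
  have hR := hr.trans hrR
  rw [mem_disk_iff hr] at hp
  refine norm_le_of_dot_self_le zero_le_two ?_
  rw [dot_outwardNormal_self hR.ne', power, one_sub_div (by positivity),
    div_le_iff₀ (by positivity)]
  nlinarith [sq_nonneg (p.1 + R)]

theorem norm_normalizedGrad_sub_outwardNormal_le (f : ℝ × ℝ → ℝ) (hrR : r < R) (hp : p ∈ disk r) :
    ‖normalizedGrad f p - outwardNormal R p‖ ≤ 3 :=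
  (norm_sub_le _ _).trans (by
    linarith [norm_normalizedGrad_le_one f p, norm_outwardNormal_le hrR hp])

theorem exists_contDiff_arc_graph (hr : 0 < r) (hrR : r < R) :
    ∃ γ : ℝ → ℝ, ContDiff ℝ 2 γ ∧ side R r = disk r ∩ {p | γ p.2 < p.1} ∧
      arc R r = disk r ∩ {p | p.1 = γ p.2} := by
  have hR := hr.trans hrR
  let χ : ContDiffBump (0 : ℝ) := ⟨r, (r + R) / 2, hr, by linarith⟩
  have hpos : ∀ y, 0 < R ^ 2 - χ y * y ^ 2 := fun y => by
    rcases lt_or_ge |y| R with hy | hy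
    · nlinarith [mul_le_of_le_one_left (sq_nonneg y) (χ.le_one (x := y)),
        sq_lt_sq' (abs_lt.1 hy).1 (abs_lt.1 hy).2]
    · have hχ₀ : χ y = 0 := χ.zero_of_le_dist (by
        rw [Real.dist_eq, sub_zero]; exact (by linarith : (r + R) / 2 ≤ R).trans hy)
      rw [hχ₀]
      nlinarith
  have hχ : ∀ p ∈ disk r, χ p.2 = 1 ∧ p.1 < R := fun p hp => by
    rw [mem_disk_iff hr] at hp
    refine ⟨χ.one_of_mem_closedBall ?_, by nlinarith [sq_nonneg p.2]⟩
    rw [mem_closedBall_zero_iff]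
    exact abs_le_of_sq_le_sq (by nlinarith [sq_nonneg p.1]) hr.le
  refine ⟨fun y => R - √(R ^ 2 - χ y * y ^ 2), ?_, ?_, ?_⟩
  · exact contDiff_const.sub
      ((contDiff_const.sub (χ.contDiff.mul (contDiff_id.pow 2))).sqrt fun y => (hpos y).ne')
  · ext p
    rw [mem_side_iff hR]
    refine and_congr_right fun hp => ?_
    rw [mem_ofPred_eq, sub_lt_comm, Real.lt_sqrt (by linarith [(hχ p hp).2]), (hχ p hp).1, power]
    constructor <;> intro h <;> linarith [show (R - p.1) ^ 2 = (p.1 - R) ^ 2 by ring]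
  · ext p
    rw [mem_arc_iff hR]
    refine and_congr_right fun hp => ?_
    have hy := hpos p.2
    rw [(hχ p hp).1] at hy
    rw [mem_ofPred_eq, eq_sub_iff_add_eq, ← eq_sub_iff_add_eq', (hχ p hp).1,
      Real.sqrt_eq_iff_eq_sq hy.le (by linarith [(hχ p hp).2]), power]
    constructor <;> intro h <;> linarith [show (R - p.1) ^ 2 = (p.1 - R) ^ 2 by ring]

end geometry

/-! ### Weak infinite boundary values -/

/-- The defect `1 - X_f · Y` for `X_f = normalizedGrad f` and `Y = outwardNormal R`, weighted with
the flux density of the cutoff function `cut e ∘ power R`, which is concentrated near the arc. -/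
def layerDefect (R : ℝ) (f : ℝ × ℝ → ℝ) (e : ℝ) (p : ℝ × ℝ) : ℝ :=
  cut' e (power R p) * (2 * R * (1 - dot (normalizedGrad f p) (outwardNormal R p)))

/-- A weak form of "`f` has boundary values `+∞` on the arc": the boundary layer integrals of the
defect, taken over the points where `f < M` in a compact subset of the disk, tend to zero. -/
def WeaklyTendstoTop (R r : ℝ) (f : ℝ × ℝ → ℝ) : Prop :=
  ∀ K, IsCompact K → K ⊆ disk r → ∀ M : ℝ,
    Tendsto (fun e => ∫ p in side R r ∩ (K ∩ {p | f p < M}), layerDefect R f e p)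
      (nhdsWithin 0 (Ioi 0)) (nhds 0)

section weak

variable {R r e : ℝ} {p : ℝ × ℝ} {f l : ℝ × ℝ → ℝ}

theorem dot_normalizedGrad_outwardNormal_le_one (f : ℝ × ℝ → ℝ) (hR : 0 < R) (hp : p ∈ side R r) :
    dot (normalizedGrad f p) (outwardNormal R p) ≤ 1 :=
  dot_le_one (dot_normalizedGrad_self_le_one f p) (dot_outwardNormal_self_le_one hR hp)

theorem layerDefect_nonneg (hR : 0 < R) (he : 0 < e) (hp : p ∈ side R r) :
    0 ≤ layerDefect R f e p :=
  mul_nonneg (cut'_nonneg he _) (mul_nonneg (by positivity)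
    (sub_nonneg.2 (dot_normalizedGrad_outwardNormal_le_one f hR hp)))

theorem integrableOn_layerDefect (hf : ContDiffOn ℝ 2 f (side R r)) (hR : 0 < R)
    (hrR : r < R) (he : 0 < e) : IntegrableOn (layerDefect R f e) (side R r) := by
  obtain ⟨B, hB⟩ := exists_deriv_smoothTransition_le
  have hX := (contDiffOn_normalizedGrad isOpen_side hf).continuousOn
  have hY := (contDiff_outwardNormal (R := R) (n := 0)).continuous.continuousOn (s := side R r)
  have hcut := ((continuous_cut' e).comp (continuous_power (R := R))).continuousOn (s := side R r)
  have hcont : ContinuousOn (layerDefect R f e) (side R r) := hcut.mul (continuousOn_const.mul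
    (continuousOn_const.sub ((hX.fst.mul hY.fst).add (hX.snd.mul hY.snd))))
  refine .of_bound isBounded_side.measure_lt_top
    (hcont.aestronglyMeasurable isOpen_side.measurableSet) (B / e * (2 * R * 5))
    ((ae_restrict_iff' isOpen_side.measurableSet).2 (Eventually.of_forall fun p hp => ?_))
  rw [Real.norm_of_nonneg (layerDefect_nonneg hR he hp)]
  have hdot : -dot (normalizedGrad f p) (outwardNormal R p) ≤ 2 * 1 * 2 :=
    (neg_le_abs _).trans ((abs_dot_le _ _).trans (by
      gcongr
      exacts [norm_normalizedGrad_le_one f p, norm_outwardNormal_le hrR hp.1]))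
  exact mul_le_mul (div_le_div_of_nonneg_right (hB _) he.le)
    (mul_le_mul_of_nonneg_left (by linarith) (by positivity))
    (mul_nonneg (by positivity) (sub_nonneg.2 (dot_normalizedGrad_outwardNormal_le_one f hR hp)))
    ((cut'_nonneg he 0).trans (div_le_div_of_nonneg_right (hB _) he.le))

/-- Compactness gives a neighborhood of the arc in which `f ≥ M` on the part that lies in `K`, so
that for small `e` the integrand vanishes. -/
theorem weaklyTendstoTop_of_tendsto (hR : 0 < R)
    (hf : ∀ P ∈ arc R r, Tendsto f (nhdsWithin P (side R r)) atTop) : WeaklyTendstoTop R r f := by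
  intro K hK hKD M
  have hlow : ∀ᶠ e in nhds (0 : ℝ), ∀ p ∈ K, p ∈ side R r → f p < M → 2 * e ≤ power R p := by
    refine hK.eventually_forall_of_forall_eventually fun P hP => ?_
    rcases eq_or_ne (power R P) 0 with hzero | hne
    · have hev := eventually_nhdsWithin_iff.1
        ((hf P ((mem_arc_iff hR).2 ⟨hKD hP, hzero⟩)).eventually_ge_atTop M)
      rw [nhds_prod_eq]
      exact hev.prod_inr _ |>.mono fun x hx hs hlt => absurd (hx hs) hlt.not_ge
    · rcases hne.lt_or_gt with hneg | hpos
      · have hev : ∀ᶠ Q in nhds P, power R Q < 0 :=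
          continuous_power.continuousAt.eventually_lt_const hneg
        rw [nhds_prod_eq]
        exact hev.prod_inr _ |>.mono fun x hx hs => absurd ((mem_side_iff hR).1 hs).2 hx.not_gt
      · have hcont : ContinuousAt (fun x : ℝ × (ℝ × ℝ) => power R x.2 - 2 * x.1) (0, P) := by
          have := continuous_power (R := R)
          fun_prop
        exact (hcont.eventually_const_lt (by simpa using hpos)).mono fun x hx _ _ => by linarith
  refine tendsto_const_nhds.congr' ?_
  filter_upwards [nhdsWithin_le_nhds hlow, self_mem_nhdsWithin] with e he he0
  refine (setIntegral_eq_zero_of_forall_eq_zero fun p hp => ?_).symm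
  rw [layerDefect, cut'_eq_zero he0 (he p hp.2.1 hp.1 hp.2.2), zero_mul]

theorem exists_contDiff_bump {K E : Set (ℝ × ℝ)} (hK : IsCompact K) (hE : IsOpen E) (hKE : K ⊆ E) :
    ∃ l : ℝ × ℝ → ℝ, ContDiff ℝ 1 l ∧ HasCompactSupport l ∧ tsupport l ⊆ E ∧
      (∀ p, l p ∈ Icc 0 1) ∧ ∀ p ∈ K, l p = 1 := by
  obtain ⟨L, hL, hKL, hLE⟩ := exists_compact_between hK hE hKE
  obtain ⟨l, hone, hzero, hIcc⟩ := exists_contMDiffMap_one_nhds_of_subset_interior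
    (modelWithCornersSelf ℝ (ℝ × ℝ)) (n := 1) hK.isClosed hKL
  have hsupp : tsupport l ⊆ L := closure_minimal
    (fun p hp => by_contra fun h => hp (hzero p h)) hL.isClosed
  exact ⟨l, contMDiff_iff_contDiff.1 l.contMDiff, .intro hL hzero, hsupp.trans hLE, hIcc,
    fun p hp => hone.self_of_nhdsSet p hp⟩

theorem grad_bump_mul_one_sub_cut (hR : R ≠ 0) (hl : DifferentiableAt ℝ l p) :
    grad (fun q => l q * (1 - cut e (power R q))) p
      = (1 - cut e (power R p)) • grad l p
        + (2 * R * (l p * cut' e (power R p))) • outwardNormal R p := by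
  have hφ := (HasPartials.of_differentiableAt hl).mul
    ((HasPartials.const (p := p) 1).sub (hasPartials_power.comp (hasDerivAt_cut e (power R p))))
  rw [hφ.grad_eq, grad, outwardNormal, Prod.smul_mk, Prod.smul_mk, Prod.mk_add_mk]
  simp only [smul_eq_mul]
  congr 1 <;> field_simp <;> ring

theorem bump_mul_layerDefect_eq (hR : R ≠ 0) (hl : DifferentiableAt ℝ l p) :
    l p * layerDefect R f e p
      = (1 - cut e (power R p)) * fluxIntegrand (-1 / R) l (normalizedGrad f - outwardNormal R) p
        + 2 / R * (l p * (cut' e (power R p) * power R p))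
        - fluxIntegrand (-1 / R) (fun q => l q * (1 - cut e (power R q)))
            (normalizedGrad f - outwardNormal R) p := by
  have hself := dot_outwardNormal_self (p := p) hR
  have hpow : power R p / R = R * (power R p / R ^ 2) := by field_simp
  simp only [layerDefect, fluxIntegrand, grad_bump_mul_one_sub_cut hR hl, dot, Pi.sub_apply,
    Prod.fst_add, Prod.snd_add, Prod.smul_fst, Prod.smul_snd, smul_eq_mul,
    Prod.fst_sub, Prod.snd_sub] at hself ⊢
  linear_combination (-2 * R * l p * cut' e (power R p)) * hself
    - 2 * l p * cut' e (power R p) * hpow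

theorem bump_mul_layerDefect_le {A B : ℝ} (hR : 0 < R) (he : 0 < e) (hp : p ∈ side R r)
    (hl : DifferentiableAt ℝ l p) (hl01 : l p ∈ Icc 0 1)
    (hB : ∀ t, deriv Real.smoothTransition t ≤ B)
    (hA0 : 0 ≤ A) (hA : fluxIntegrand (-1 / R) l (normalizedGrad f - outwardNormal R) p ≤ A) :
    l p * layerDefect R f e p
      ≤ (layer (side R r) (power R) e).indicator (fun _ => A + 2 / R * (2 * B)) p
        - fluxIntegrand (-1 / R) (fun q => l q * (1 - cut e (power R q)))
            (normalizedGrad f - outwardNormal R) p := by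
  rw [bump_mul_layerDefect_eq hR.ne' hl]
  refine sub_le_sub_right ?_ _
  have hpow : 0 ≤ power R p := ((mem_side_iff hR).1 hp).2.le
  have hcut := cut'_mul_le he hB hpow
  by_cases hlt : power R p < 2 * e
  · rw [indicator_of_mem (show p ∈ layer (side R r) (power R) e from ⟨hp, hlt⟩)]
    rw [if_pos hlt] at hcut
    have h₁ : (1 - cut e (power R p))
        * fluxIntegrand (-1 / R) l (normalizedGrad f - outwardNormal R) p ≤ A := by
      nlinarith [cut_nonneg e (power R p), cut_le_one e (power R p)]
    have h₂ : l p * (cut' e (power R p) * power R p) ≤ 2 * B :=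
      (mul_le_of_le_one_left (mul_nonneg (cut'_nonneg he _) hpow) hl01.2).trans hcut
    gcongr
  · rw [indicator_of_notMem fun h => hlt h.2, cut_eq_one he (not_lt.1 hlt),
      cut'_eq_zero he (not_lt.1 hlt)]
    simp

theorem integrableOn_bump_mul_layerDefect (hR : 0 < R) (hrR : r < R) (he : 0 < e)
    (hf : ContDiffOn ℝ 2 f (side R r)) (hl : Continuous l) (hl01 : ∀ p, l p ∈ Icc 0 1) :
    IntegrableOn (fun p => l p * layerDefect R f e p) (side R r) :=
  (integrableOn_layerDefect hf hR hrR he).bdd_mul hl.aestronglyMeasurable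
    (Eventually.of_forall fun p => (Real.norm_of_nonneg (hl01 p).1).trans_le (hl01 p).2)

theorem contDiff_bump_mul_one_sub_cut (hl : ContDiff ℝ 1 l) :
    ContDiff ℝ 1 fun q => l q * (1 - cut e (power R q)) :=
  hl.mul (contDiff_const.sub ((contDiff_cut e).comp contDiff_power))

theorem setIntegral_bump_mul_layerDefect_le {A B : ℝ} (hR : 0 < R) (hrR : r < R) (he : 0 < e)
    (hf : ContDiffOn ℝ 2 f (side R r)) (hl : ContDiff ℝ 1 l) (hlc : HasCompactSupport l)
    (hl01 : ∀ p, l p ∈ Icc 0 1) (hB : ∀ t, deriv Real.smoothTransition t ≤ B) (hA0 : 0 ≤ A)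
    (hA : ∀ p ∈ side R r, fluxIntegrand (-1 / R) l (normalizedGrad f - outwardNormal R) p ≤ A)
    (hflux : ∫ p in side R r, fluxIntegrand (-1 / R) (fun q => l q * (1 - cut e (power R q)))
      (normalizedGrad f - outwardNormal R) p = 0) :
    ∫ p in side R r, l p * layerDefect R f e p
      ≤ (A + 2 / R * (2 * B)) * volume.real (layer (side R r) (power R) e) := by
  have hlayer := integrableOn_indicator_layer isOpen_side isBounded_side
    continuous_power.continuousOn e (A + 2 / R * (2 * B)) (D := side R r) (g := power R)
  have hint := integrableOn_fluxIntegrand (c := -1 / R) (B := 3)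
    (contDiff_bump_mul_one_sub_cut (R := R) (e := e) hl) hlc.mul_right
    isOpen_side.measurableSet
    ((contDiffOn_normalizedGrad isOpen_side hf).continuousOn.sub
      (contDiff_outwardNormal (n := 0)).continuous.continuousOn)
    fun p hp => norm_normalizedGrad_sub_outwardNormal_le f hrR hp.1
  calc _ ≤ ∫ p in side R r, _ := setIntegral_mono_on
        (integrableOn_bump_mul_layerDefect hR hrR he hf hl.continuous hl01) (hlayer.sub hint)
        isOpen_side.measurableSet fun p hp => bump_mul_layerDefect_le hR he hp
          (hl.differentiable one_ne_zero p) (hl01 p) hB hA0 (hA p hp)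
    _ = _ := by
      rw [integral_sub' hlayer hint, hflux, sub_zero,
        setIntegral_indicator_layer isOpen_side continuous_power.continuousOn]

theorem measurableSet_side_inter_lt (hf : ContinuousOn f (side R r)) {K : Set (ℝ × ℝ)}
    (hK : IsCompact K) (M : ℝ) : MeasurableSet (side R r ∩ (K ∩ {p | f p < M})) := by
  rw [← inter_assoc, inter_right_comm]
  exact (hf.isOpen_inter_preimage isOpen_side isOpen_Iio).measurableSet.inter hK.measurableSet

/-- The test functions are `l (1 - cut e ∘ power R)` with `l` a bump function. -/
theorem weaklyTendstoTop_of_flux (hR : 0 < R) (hrR : r < R) (hf : ContDiffOn ℝ 2 f (side R r))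
    (hflux : ∀ φ : ℝ × ℝ → ℝ, ContDiff ℝ 1 φ → HasCompactSupport φ → tsupport φ ⊆ disk r →
      ∫ p in side R r, fluxIntegrand (-1 / R) φ (normalizedGrad f - outwardNormal R) p = 0) :
    WeaklyTendstoTop R r f := by
  intro K hK hKD M
  obtain ⟨l, hl, hlc, hlD, hl01, hone⟩ := exists_contDiff_bump hK isOpen_disk hKD
  obtain ⟨B, hB⟩ := exists_deriv_smoothTransition_le
  obtain ⟨A, hA⟩ := exists_fluxIntegrand_le (c := -1 / R) (B := 3) hl hlc
  have hlim : Tendsto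
      (fun e => (max A 0 + 2 / R * (2 * B)) * volume.real (layer (side R r) (power R) e))
      (nhdsWithin 0 (Ioi 0)) (nhds 0) := by
    simpa using (tendsto_measure_layer isOpen_side isBounded_side continuous_power.continuousOn
      fun p hp => ((mem_side_iff hR).1 hp).2).const_mul (max A 0 + 2 / R * (2 * B))
  have hmeas := measurableSet_side_inter_lt hf.continuousOn hK M
  refine squeeze_zero' ?_ ?_ hlim <;> filter_upwards [self_mem_nhdsWithin] with e he
  · exact setIntegral_nonneg hmeas fun p hp => layerDefect_nonneg hR he hp.1
  · calc _ = ∫ p in side R r ∩ (K ∩ {p | f p < M}), l p * layerDefect R f e p :=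
          setIntegral_congr_fun hmeas fun p hp => by rw [hone p hp.2.1, one_mul]
      _ ≤ ∫ p in side R r, l p * layerDefect R f e p := setIntegral_mono_set
          (integrableOn_bump_mul_layerDefect hR hrR he hf hl.continuous hl01)
          ((ae_restrict_mem isOpen_side.measurableSet).mono fun p hp =>
            mul_nonneg (hl01 p).1 (layerDefect_nonneg hR he hp)) inter_subset_left.eventuallyLE
      _ ≤ _ := setIntegral_bump_mul_layerDefect_le hR hrR he hf hl hlc hl01 hB (le_max_right A 0)
          (fun p hp => (hA _ p (norm_normalizedGrad_sub_outwardNormal_le f hrR hp.1)).trans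
            (le_max_left A 0))
          (hflux _ (contDiff_bump_mul_one_sub_cut hl)
            hlc.mul_right ((tsupport_mul_subset_left ..).trans hlD))

end weak

/-! ### Comparison near the arc -/

section comparisonArc

variable {R r e B C M : ℝ} {D K : Set (ℝ × ℝ)} {f b g : ℝ × ℝ → ℝ} {p : ℝ × ℝ}

/-- The cutoff function of the comparison near the arc, which vanishes near the arc and near the
zeros of `g`. -/
def arcCutoff (R : ℝ) (g : ℝ × ℝ → ℝ) (e : ℝ) (p : ℝ × ℝ) : ℝ :=
  cut e (g p) * cut e (power R p)

theorem eventually_cut_eq_one {Q : ℝ × ℝ} (hg : ContinuousAt g Q) (hpos : 0 < g Q) :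
    ∀ᶠ x : ℝ × (ℝ × ℝ) in nhdsWithin 0 (Ioi 0) ×ˢ nhds Q, cut x.1 (g x.2) = 1 := by
  have he : ∀ᶠ e in nhdsWithin (0 : ℝ) (Ioi 0), 0 < e ∧ 2 * e < g Q / 2 :=
    eventually_mem_nhdsWithin.and (nhdsWithin_le_nhds
      ((continuous_const.mul continuous_id).continuousAt.eventually_lt_const (by simpa using hpos)))
  filter_upwards [he.prod_mk (hg.eventually_const_lt (half_lt_self hpos))] with x hx
  exact cut_eq_one hx.1.1 (hx.1.2.trans hx.2).le

theorem isCutoffOn_arcCutoff {N : Set (ℝ × ℝ)} (he : 0 < e) (hg : ContDiffOn ℝ 1 g D)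
    (hcomp : ∃ L ⊆ D, IsCompact L ∧ ∀ p ∈ D ∩ N, e ≤ g p → e ≤ power R p → p ∈ L) :
    IsCutoffOn D N (arcCutoff R g e) where
  contDiffOn := ((contDiff_cut e).comp_contDiffOn hg).mul
    ((contDiff_cut e).comp contDiff_power).contDiffOn
  nonneg _ _ := mul_nonneg (cut_nonneg _ _) (cut_nonneg _ _)
  exists_isCompact := by
    obtain ⟨L, hLD, hL, hmem⟩ := hcomp
    refine ⟨L, hLD, hL, fun p hp hpL => ?_⟩
    rcases lt_or_ge (g p) e with hlt | hge
    · rw [arcCutoff, cut_eq_zero he hlt.le, zero_mul]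
    · rw [arcCutoff, cut_eq_zero he (not_le.1 fun h => hpL (hmem p hp hge h)).le, mul_zero]

/-- The flux bound for `arcCutoff R g e`, for barriers bounded above by `M`. -/
def arcFluxBound (R B C M : ℝ) (D : Set (ℝ × ℝ)) (f g : ℝ × ℝ → ℝ) (e : ℝ) (p : ℝ × ℝ) : ℝ :=
  (layer D g e).indicator (fun _ => C * (2 * B)) p
    + (D ∩ {q | f q < M}).indicator (layerDefect R f e) p

theorem dot_grad_arcCutoff_le (hR : 0 < R) (he : 0 < e) (hp : p ∈ side R r)
    (hg : DifferentiableAt ℝ g p)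
    (hgC : dot (normalizedGrad f p - normalizedGrad b p) (grad g p) ≤ C * g p) :
    dot (normalizedGrad f p - normalizedGrad b p) (grad (arcCutoff R g e) p)
      ≤ cut e (power R p) * (C * (cut' e (g p) * g p)) + cut e (g p) * layerDefect R f e p := by
  have hζ := ((HasPartials.of_differentiableAt hg).comp (hasDerivAt_cut e (g p))).mul
    (hasPartials_power.comp (hasDerivAt_cut e (power R p)))
  have hgrad : grad (arcCutoff R g e) p = (cut e (power R p) * cut' e (g p)) • grad g p
      + (cut e (g p) * cut' e (power R p)) • grad (power R) p := by
    refine hζ.grad_eq.trans ?_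
    rw [hasPartials_power.grad_eq, grad, Prod.smul_mk, Prod.smul_mk, Prod.mk_add_mk]
    simp only [smul_eq_mul]
    congr 1 <;> ring
  have hpow : dot (normalizedGrad f p - normalizedGrad b p) (grad (power R) p)
      ≤ 2 * R * (1 - dot (normalizedGrad f p) (outwardNormal R p)) := by
    have hb := dot_normalizedGrad_outwardNormal_le_one b hR hp
    rw [grad_power hR.ne']
    simp only [dot, Prod.smul_fst, Prod.smul_snd, smul_eq_mul, Prod.fst_sub, Prod.snd_sub] at hb ⊢
    nlinarith
  calc _ = cut e (power R p) * cut' e (g p)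
          * dot (normalizedGrad f p - normalizedGrad b p) (grad g p)
        + cut e (g p) * cut' e (power R p)
          * dot (normalizedGrad f p - normalizedGrad b p) (grad (power R) p) := by
        rw [hgrad]
        simp only [dot, Prod.fst_add, Prod.snd_add, Prod.smul_fst, Prod.smul_snd, smul_eq_mul]
        ring
    _ ≤ cut e (power R p) * cut' e (g p) * (C * g p) + cut e (g p) * cut' e (power R p)
          * (2 * R * (1 - dot (normalizedGrad f p) (outwardNormal R p))) :=
        add_le_add
          (mul_le_mul_of_nonneg_left hgC (mul_nonneg (cut_nonneg _ _) (cut'_nonneg he _)))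
          (mul_le_mul_of_nonneg_left hpow (mul_nonneg (cut_nonneg _ _) (cut'_nonneg he _)))
    _ = _ := by rw [layerDefect]; ring

theorem isFluxBound_arcFluxBound (hR : 0 < R) (hrR : r < R) (he : 0 < e) (hC : 0 ≤ C)
    (hB : ∀ t, deriv Real.smoothTransition t ≤ B) (hD : IsOpen D) (hDs : D ⊆ side R r)
    (hf : ContDiffOn ℝ 2 f (side R r)) (hbM : ∀ p ∈ D, b p ≤ M)
    (hg : ContDiffOn ℝ 1 g D) (hpos : ∀ p ∈ D, 0 < g p)
    (hgC : ∀ p ∈ D, dot (normalizedGrad f p - normalizedGrad b p) (grad g p) ≤ C * g p) :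
    IsFluxBound D f b (arcCutoff R g e) (arcFluxBound R B C M D f g e) where
  integrableOn := (integrableOn_indicator_layer hD (isBounded_side.subset hDs) hg.continuousOn e
    _).add (((integrableOn_layerDefect hf hR hrR he).mono_set hDs).indicator
      ((hf.continuousOn.mono hDs).isOpen_inter_preimage hD isOpen_Iio).measurableSet)
  nonneg p _ := by
    have hB0 : 0 ≤ B := (deriv_smoothTransition_nonneg 0).trans (hB 0)
    exact add_nonneg (indicator_nonneg (fun _ _ => by positivity) _)
      (indicator_nonneg (fun q hq => layerDefect_nonneg hR he (hDs hq.1)) _)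
  dot_le p hp hlt := by
    have hcut : C * (cut' e (g p) * g p) ≤ (layer D g e).indicator (fun _ => C * (2 * B)) p := by
      have h := mul_le_mul_of_nonneg_left (cut'_mul_le he hB (hpos p hp).le) hC
      split_ifs at h with hlt
      · rwa [indicator_of_mem (show p ∈ layer D g e from ⟨hp, hlt⟩)]
      · rwa [indicator_of_notMem fun hmem => hlt hmem.2, ← mul_zero C]
    have hmem : p ∈ D ∩ {q | f q < M} := ⟨hp, hlt.trans_le (hbM p hp)⟩
    refine (dot_grad_arcCutoff_le hR he (hDs hp) ((hg.differentiableOn one_ne_zero).differentiableAt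
      (hD.mem_nhds hp)) (hgC p hp)).trans (add_le_add ?_ ?_)
    · exact (mul_le_of_le_one_left (mul_nonneg hC (mul_nonneg (cut'_nonneg he _) (hpos p hp).le))
        (cut_le_one _ _)).trans hcut
    · rw [indicator_of_mem hmem]
      exact mul_le_of_le_one_left (layerDefect_nonneg hR he (hDs hp)) (cut_le_one _ _)

theorem tendsto_setIntegral_arcFluxBound (hR : 0 < R) (hrR : r < R) (hD : IsOpen D)
    (hDs : D ⊆ side R r) (hK : IsCompact K) (hKr : K ⊆ disk r) (hDK : D ⊆ K)
    (hf : ContDiffOn ℝ 2 f (side R r)) (hinf : WeaklyTendstoTop R r f)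
    (hg : ContDiffOn ℝ 1 g D) (hpos : ∀ p ∈ D, 0 < g p) :
    Tendsto (fun e => ∫ p in D, arcFluxBound R B C M D f g e p) (nhdsWithin 0 (Ioi 0))
      (nhds 0) := by
  have hbd := isBounded_side.subset hDs
  have hmeas : MeasurableSet (D ∩ {q | f q < M}) :=
    ((hf.continuousOn.mono hDs).isOpen_inter_preimage hD isOpen_Iio).measurableSet
  have hlayer : Tendsto (fun e => ∫ p in D, (layer D g e).indicator (fun _ => C * (2 * B)) p)
      (nhdsWithin 0 (Ioi 0)) (nhds 0) := by
    simp only [setIntegral_indicator_layer hD hg.continuousOn]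
    simpa using (tendsto_measure_layer hD hbd hg.continuousOn hpos).const_mul (C * (2 * B))
  have hdefect : Tendsto (fun e => ∫ p in D, (D ∩ {q | f q < M}).indicator (layerDefect R f e) p)
      (nhdsWithin 0 (Ioi 0)) (nhds 0) := by
    refine squeeze_zero' ?_ ?_ (hinf K hK hKr M) <;>
      filter_upwards [self_mem_nhdsWithin] with e he
    · exact setIntegral_nonneg hD.measurableSet fun p _ =>
        indicator_nonneg (fun q hq => layerDefect_nonneg hR he (hDs hq.1)) p
    · rw [setIntegral_indicator hmeas]
      exact setIntegral_mono_set
        ((integrableOn_layerDefect hf hR hrR he).mono_set inter_subset_left)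
        ((ae_restrict_mem (measurableSet_side_inter_lt hf.continuousOn hK M)).mono
          fun p hp => layerDefect_nonneg hR he hp.1)
        (LE.le.eventuallyLE fun p hp => ⟨hDs hp.1, hDK hp.1, hp.2.2⟩)
  have h := hlayer.add hdefect
  rw [add_zero] at h
  refine h.congr' ?_
  filter_upwards [self_mem_nhdsWithin] with e he
  exact (integral_add (integrableOn_indicator_layer hD hbd hg.continuousOn e _)
    (((integrableOn_layerDefect hf hR hrR he).mono_set hDs).indicator hmeas)).symm

/-- On the part of the boundary of `D` where `g = 0`, the factor `cut e ∘ g` replaces a comparison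
of boundary values by a comparison of fluxes. -/
theorem le_of_weaklyTendstoTop (hR : 0 < R) (hrR : r < R) (hD : IsOpen D)
    (hDs : D ⊆ side R r) (hK : IsCompact K) (hKr : K ⊆ disk r) (hDK : D ⊆ K)
    (hf : IsDivFormSolution (1 / R) (side R r) f) (hinf : WeaklyTendstoTop R r f)
    (hb : ContDiffOn ℝ 2 b D) (hcurv : ∀ p ∈ D, 1 / R < twiceMeanCurvature b p)
    (hbM : ∀ p ∈ D, b p ≤ M) (hg : ContDiffOn ℝ 1 g D) (hpos : ∀ p ∈ D, 0 < g p) (hC : 0 ≤ C)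
    (hgC : ∀ p ∈ D, dot (normalizedGrad f p - normalizedGrad b p) (grad g p) ≤ C * g p)
    (hcomp : ∀ e > 0, ∃ L ⊆ D, IsCompact L ∧
      ∀ p ∈ D ∩ {p | f p < b p}, e ≤ g p → e ≤ power R p → p ∈ L) :
    ∀ p ∈ D, b p ≤ f p := by
  obtain ⟨B, hB⟩ := exists_deriv_smoothTransition_le
  have hpos0 : ∀ᶠ e in nhdsWithin (0 : ℝ) (Ioi 0), 0 < e := self_mem_nhdsWithin
  refine le_of_curvature_lt (l := nhdsWithin 0 (Ioi 0)) (ζ := arcCutoff R g)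
    (T := arcFluxBound R B C M D f g) hD (hf.contDiffOn.mono hDs) hb
    (fun p hp => (hf.curvature_eq p (hDs hp)).trans_lt (hcurv p hp))
    (hpos0.mono fun e he => isCutoffOn_arcCutoff he hg (hcomp e he)) (fun Q hQ => ?_)
    (hpos0.mono fun e he => isFluxBound_arcFluxBound hR hrR he hC hB hD hDs hf.contDiffOn hbM hg
      hpos hgC)
    (tendsto_setIntegral_arcFluxBound hR hrR hD hDs hK hKr hDK hf.contDiffOn hinf hg hpos)
  filter_upwards [eventually_cut_eq_one (hg.continuousOn.continuousAt (hD.mem_nhds hQ)) (hpos Q hQ),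
    eventually_cut_eq_one (g := power R) continuous_power.continuousAt
      ((mem_side_iff hR).1 (hDs hQ)).2] with x h₁ h₂
  rw [arcCutoff, h₁, h₂, one_mul]

end comparisonArc

/-! ### The barrier `√G - k` -/

/-- The coordinate of `Q` in the direction `ν`, counted from `P`. -/
def height (ν P Q : ℝ × ℝ) : ℝ := dot ν (Q - P)

/-- The square of the Euclidean distance of `P` and `Q`. -/
def distSq (P Q : ℝ × ℝ) : ℝ := dot (Q - P) (Q - P)

/-- The quadratic polynomial `G` whose square root is the first barrier. Its graph `z = √G` is a
piece of a hyperboloid of one sheet. -/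
def quadric (ν P : ℝ × ℝ) (l : ℝ) (Q : ℝ × ℝ) : ℝ :=
  12 * l ^ 2 + 3 * height ν P Q ^ 2 - distSq P Q

/-- The factor `√(|∇G|² + 4 G)` by which `∇G` is divided in the normalized gradient of `√G`, where
`G = quadric ν P l` and `ν` is a unit vector. -/
def quadricSpeed (ν P : ℝ × ℝ) (l : ℝ) (Q : ℝ × ℝ) : ℝ := √(48 * l ^ 2 + 24 * height ν P Q ^ 2)

section quadric

variable {ν P Q : ℝ × ℝ} {l k R : ℝ}

theorem hasPartials_height : HasPartials (height ν P) ν.1 ν.2 Q := by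
  have h := ((HasPartials.const (p := Q) ν.1).mul (HasPartials.fst.sub (.const P.1))).add
    ((HasPartials.const (p := Q) ν.2).mul (HasPartials.snd.sub (.const P.2)))
  exact h.congr (by ring) (by ring)

theorem hasPartials_distSq :
    HasPartials (distSq P) (2 * (Q.1 - P.1)) (2 * (Q.2 - P.2)) Q := by
  have hx : HasPartials (fun q : ℝ × ℝ => q.1 - P.1) 1 0 Q :=
    (HasPartials.fst.sub (.const P.1)).congr (by ring) (by ring)
  have hy : HasPartials (fun q : ℝ × ℝ => q.2 - P.2) 0 1 Q :=
    (HasPartials.snd.sub (.const P.2)).congr (by ring) (by ring)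
  exact ((hx.mul hx).add (hy.mul hy)).congr (by ring) (by ring)

theorem distSq_nonneg : 0 ≤ distSq P Q := dot_self_nonneg _

theorem contDiff_height {n : WithTop ℕ∞} : ContDiff ℝ n (height ν P) := by
  unfold height dot; fun_prop

theorem contDiff_distSq {n : WithTop ℕ∞} : ContDiff ℝ n (distSq P) := by
  unfold distSq dot; fun_prop

theorem contDiff_quadric {n : WithTop ℕ∞} : ContDiff ℝ n (quadric ν P l) :=
  (contDiff_const.add (contDiff_const.mul (contDiff_height.pow 2))).sub contDiff_distSq

theorem height_sq_le (hν : dot ν ν = 1) : height ν P Q ^ 2 ≤ distSq P Q := by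
  simpa only [height, distSq, hν, one_mul] using dot_sq_le ν (Q - P)

theorem isCompact_distSq_le (P : ℝ × ℝ) (c : ℝ) : IsCompact {Q | distSq P Q ≤ c} :=
  Metric.isCompact_of_isClosed_isBounded
    (isClosed_le (contDiff_distSq (n := 0)).continuous continuous_const)
    (Metric.isBounded_closedBall.subset fun Q hQ => mem_closedBall_iff_norm.2
      (norm_le_of_dot_self_le (Real.sqrt_nonneg c) (by
        rw [Real.sq_sqrt (distSq_nonneg.trans hQ)]; exact hQ)))

theorem hasPartials_quadric :
    HasPartials (quadric ν P l) (6 * height ν P Q * ν.1 - 2 * (Q.1 - P.1))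
      (6 * height ν P Q * ν.2 - 2 * (Q.2 - P.2)) Q := by
  have h := ((HasPartials.const (p := Q) (12 * l ^ 2)).add ((HasPartials.const (p := Q) 3).mul
    (hasPartials_height.comp (hasDerivAt_pow 2 (height ν P Q))))).sub (hasPartials_distSq (P := P))
  refine h.congr ?_ ?_ <;> · push_cast; ring

theorem dot_grad_quadric_normal (hν : dot ν ν = 1) :
    dot (grad (quadric ν P l) Q) ν = 4 * height ν P Q := by
  have ht : height ν P Q = ν.1 * (Q.1 - P.1) + ν.2 * (Q.2 - P.2) := rfl
  rw [hasPartials_quadric.grad_eq]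
  unfold dot at *
  linear_combination 6 * height ν P Q * hν + 2 * ht

theorem dot_grad_quadric_self (hν : dot ν ν = 1) :
    dot (grad (quadric ν P l) Q) (grad (quadric ν P l) Q)
      = 48 * l ^ 2 + 24 * height ν P Q ^ 2 - 4 * quadric ν P l Q := by
  have ht : height ν P Q = ν.1 * (Q.1 - P.1) + ν.2 * (Q.2 - P.2) := rfl
  rw [hasPartials_quadric.grad_eq, quadric]
  simp only [dot, distSq, Prod.fst_sub, Prod.snd_sub] at *
  linear_combination 36 * height ν P Q ^ 2 * hν + 24 * height ν P Q * ht

theorem divergence_grad_quadric (hν : dot ν ν = 1) : divergence (grad (quadric ν P l)) Q = 2 := by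
  have hx : HasPartials (fun q => 6 * height ν P q * ν.1 - 2 * (q.1 - P.1)) (6 * ν.1 * ν.1 - 2)
      (6 * ν.2 * ν.1) Q :=
    ((((HasPartials.const 6).mul hasPartials_height).mul (.const ν.1)).sub
      ((HasPartials.const 2).mul (HasPartials.fst.sub (.const P.1)))).congr (by ring) (by ring)
  have hy : HasPartials (fun q => 6 * height ν P q * ν.2 - 2 * (q.2 - P.2)) (6 * ν.1 * ν.2)
      (6 * ν.2 * ν.2 - 2) Q :=
    ((((HasPartials.const 6).mul hasPartials_height).mul (.const ν.2)).sub
      ((HasPartials.const 2).mul (HasPartials.snd.sub (.const P.2)))).congr (by ring) (by ring)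
  simp only [divergence, hasPartials_quadric.grad_eq, hx.pdx_eq, hy.pdy_eq]
  unfold dot at hν
  linear_combination 6 * hν

theorem quadricSpeed_sq : quadricSpeed ν P l Q ^ 2 = 48 * l ^ 2 + 24 * height ν P Q ^ 2 :=
  Real.sq_sqrt (by positivity)

theorem six_mul_le_quadricSpeed : 6 * l ≤ quadricSpeed ν P l Q :=
  Real.le_sqrt_of_sq_le (by nlinarith [sq_nonneg (height ν P Q), sq_nonneg l])

theorem quadricSpeed_pos (hl : 0 < l) : 0 < quadricSpeed ν P l Q :=
  (by positivity : 0 < 6 * l).trans_le six_mul_le_quadricSpeed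

theorem normalizedGrad_sqrt_quadric (hν : dot ν ν = 1) (hl : 0 < l)
    (hQ : 0 < quadric ν P l Q) :
    normalizedGrad (fun p => √(quadric ν P l p) - k) Q
      = (quadricSpeed ν P l Q)⁻¹ • grad (quadric ν P l) Q := by
  have hG := hasPartials_quadric (ν := ν) (P := P) (l := l) (Q := Q)
  have hb := (hG.sqrt hQ).sub (HasPartials.const k)
  have hself := dot_grad_quadric_self (P := P) (l := l) (Q := Q) hν
  rw [hG.grad_eq] at hself ⊢
  have : 0 < √(quadric ν P l Q) := Real.sqrt_pos.2 hQ
  have hss : √(quadric ν P l Q) ^ 2 = quadric ν P l Q := Real.sq_sqrt hQ.le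
  have hN := quadricSpeed_pos (ν := ν) (P := P) (Q := Q) hl
  have hW : Wgraph (fun p => √(quadric ν P l p) - k) Q
      = quadricSpeed ν P l Q / (2 * √(quadric ν P l Q)) := by
    rw [Wgraph, hb.pdx_eq, hb.pdy_eq, Real.sqrt_eq_iff_mul_self_eq (by positivity) (by positivity),
      ← pow_two, div_pow, quadricSpeed_sq]
    unfold dot at hself
    field_simp
    rw [hss]
    linear_combination hself
  rw [normalizedGrad, hW, hb.pdx_eq, hb.pdy_eq, Prod.smul_mk]
  congr 1 <;> rw [smul_eq_mul] <;> field_simp <;> ring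

theorem twiceMeanCurvature_sqrt_quadric (hν : dot ν ν = 1) (hl : 0 < l)
    (hQ : 0 < quadric ν P l Q) :
    twiceMeanCurvature (fun p => √(quadric ν P l p) - k) Q
      = (96 * l ^ 2 - 48 * height ν P Q ^ 2) / quadricSpeed ν P l Q ^ 3 := by
  have hev : ∀ᶠ p in nhds Q, 0 < quadric ν P l p :=
    (contDiff_quadric (n := 0)).continuous.continuousAt.eventually (lt_mem_nhds hQ)
  have hN := quadricSpeed_pos (ν := ν) (P := P) (Q := Q) hl
  have hspeed : HasPartials (fun q => (quadricSpeed ν P l q)⁻¹)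
      (-24 * height ν P Q / quadricSpeed ν P l Q ^ 3 * ν.1)
      (-24 * height ν P Q / quadricSpeed ν P l Q ^ 3 * ν.2) Q := by
    have h := (((HasPartials.const (p := Q) (48 * l ^ 2)).add ((HasPartials.const (p := Q) 24).mul
      (hasPartials_height.comp (hasDerivAt_pow 2 (height ν P Q))))).sqrt (by positivity)).comp
        (hasDerivAt_inv hN.ne')
    refine h.congr ?_ ?_ <;> · rw [← quadricSpeed]; push_cast; field_simp; ring
  have hgrad : DifferentiableAt ℝ (grad (quadric ν P l)) Q := by
    have : grad (quadric ν P l) = fun q => (6 * height ν P q * ν.1 - 2 * (q.1 - P.1),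
        6 * height ν P q * ν.2 - 2 * (q.2 - P.2)) := funext fun q => hasPartials_quadric.grad_eq
    rw [this]; unfold height dot; fun_prop
  rw [twiceMeanCurvature,
    divergence_congr (hev.mono fun p hp => normalizedGrad_sqrt_quadric hν hl hp),
    divergence_smul hspeed.differentiableAt hgrad, divergence_grad_quadric hν, hspeed.grad_eq]
  have hnormal := dot_grad_quadric_normal (P := P) (l := l) (Q := Q) hν
  have hsq := quadricSpeed_sq (ν := ν) (P := P) (l := l) (Q := Q)
  unfold dot at *
  field_simp
  linear_combination 2 * hsq - 24 * height ν P Q * hnormal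

theorem lt_twiceMeanCurvature_sqrt_quadric (hν : dot ν ν = 1) (hl : 0 < l) (hlR : 20 * l ≤ R)
    (hQ : 0 < quadric ν P l Q) (ht : height ν P Q ^ 2 ≤ l ^ 2) :
    1 / R < twiceMeanCurvature (fun p => √(quadric ν P l p) - k) Q := by
  have hR : 0 < R := by linarith
  have hN := quadricSpeed_pos (ν := ν) (P := P) (Q := Q) hl
  have hN9 : quadricSpeed ν P l Q < 9 * l :=
    lt_of_pow_lt_pow_left₀ 2 (by positivity) (by rw [quadricSpeed_sq]; nlinarith)
  rw [twiceMeanCurvature_sqrt_quadric hν hl hQ, div_lt_div_iff₀ hR (by positivity)]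
  calc 1 * quadricSpeed ν P l Q ^ 3 < (9 * l) ^ 3 := by
        rw [one_mul]; exact pow_lt_pow_left₀ hN9 hN.le (by norm_num)
    _ ≤ 48 * l ^ 2 * (20 * l) := by nlinarith [pow_pos hl 3]
    _ ≤ (96 * l ^ 2 - 48 * height ν P Q ^ 2) * R :=
        mul_le_mul (by linarith) hlR (by positivity) (by nlinarith)

/-- The normalized gradient of `√G` tends to the direction of `∇G` at linear rate in `G`, and no
normalized gradient exceeds that direction. -/
theorem dot_normalizedGrad_sub_sqrt_quadric_le (f : ℝ × ℝ → ℝ) (hν : dot ν ν = 1) (hl : 0 < l)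
    (hQ : 0 < quadric ν P l Q) :
    dot (normalizedGrad f Q - normalizedGrad (fun p => √(quadric ν P l p) - k) Q)
      (grad (quadric ν P l) Q) ≤ 1 / l * quadric ν P l Q := by
  rw [normalizedGrad_sqrt_quadric hν hl hQ]
  have hself := dot_grad_quadric_self (P := P) (l := l) (Q := Q) hν
  rw [← quadricSpeed_sq] at hself
  have hN := quadricSpeed_pos (ν := ν) (P := P) (Q := Q) hl
  have hN6 := six_mul_le_quadricSpeed (ν := ν) (P := P) (l := l) (Q := Q)
  set N := quadricSpeed ν P l Q
  set v := grad (quadric ν P l) Q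
  set a := √(dot v v)
  have ha : a ^ 2 = dot v v := Real.sq_sqrt (dot_self_nonneg v)
  have haN : a ≤ N := Real.sqrt_le_iff.2 ⟨hN.le, by linarith⟩
  have hXv : dot (normalizedGrad f Q) v ≤ a :=
    Real.le_sqrt_of_sq_le ((dot_sq_le _ v).trans
      (mul_le_of_le_one_left (dot_self_nonneg v) (dot_normalizedGrad_self_le_one f Q)))
  calc dot (normalizedGrad f Q - N⁻¹ • v) v
      = dot (normalizedGrad f Q) v - N⁻¹ * dot v v := by
        simp only [dot, Prod.fst_sub, Prod.snd_sub, Prod.smul_fst, Prod.smul_snd, smul_eq_mul]; ring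
    _ ≤ a - N⁻¹ * a ^ 2 := by rw [ha]; linarith
    _ ≤ 4 * quadric ν P l Q / N := by
        rw [inv_mul_eq_div, sub_le_iff_le_add, ← add_div, le_div_iff₀ hN]
        nlinarith [Real.sqrt_nonneg (dot v v)]
    _ ≤ 1 / l * quadric ν P l Q := by
        rw [one_div, inv_mul_eq_div, div_le_div_iff₀ hN hl]
        nlinarith

end quadric

/-! ### Propagation of lower bounds up to the arc -/

section propagation

variable {R r l k K : ℝ} {f : ℝ × ℝ → ℝ} {P Q : ℝ × ℝ}

theorem dot_neg_outwardNormal_self (hR : R ≠ 0) (hP : power R P = 0) :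
    dot (-outwardNormal R P) (-outwardNormal R P) = 1 := by
  simpa [dot, hP] using dot_outwardNormal_self (p := P) hR

theorem power_eq (hR : R ≠ 0) (hP : power R P = 0) (Q : ℝ × ℝ) :
    power R Q = 2 * R * height (-outwardNormal R P) P Q - distSq P Q := by
  unfold power at hP
  simp only [power, height, distSq, dot, outwardNormal, Prod.fst_neg, Prod.snd_neg, Prod.fst_sub,
    Prod.snd_sub]
  field_simp
  linear_combination hP

/-- The domain on which `√G - k` is compared with a solution, for `G` centered at a point `P` of
the arc. -/
def quadricDomain (R : ℝ) (P : ℝ × ℝ) (l : ℝ) : Set (ℝ × ℝ) :=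
  {Q | 0 < power R Q ∧ 0 < quadric (-outwardNormal R P) P l Q ∧
    height (-outwardNormal R P) P Q < l}

theorem isOpen_quadricDomain : IsOpen (quadricDomain R P l) :=
  (isOpen_lt continuous_const continuous_power).inter
    ((isOpen_lt continuous_const (contDiff_quadric (n := 0)).continuous).inter
      (isOpen_lt (contDiff_height (n := 0)).continuous continuous_const))

theorem height_pos (hR : 0 < R) (hP : power R P = 0) (hQ : 0 < power R Q) :
    0 < height (-outwardNormal R P) P Q := by
  rw [power_eq hR.ne' hP] at hQ
  by_contra! hneg
  nlinarith [distSq_nonneg (P := P) (Q := Q)]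

theorem height_sq_lt_of_mem (hR : 0 < R) (hP : power R P = 0) (hQ : Q ∈ quadricDomain R P l) :
    height (-outwardNormal R P) P Q ^ 2 < l ^ 2 :=
  pow_lt_pow_left₀ hQ.2.2 (height_pos hR hP hQ.1).le two_ne_zero

theorem distSq_le_of_mem (hR : 0 < R) (hP : power R P = 0) (hQ : Q ∈ quadricDomain R P l) :
    distSq P Q ≤ 16 * l ^ 2 := by
  have ht := height_sq_lt_of_mem hR hP hQ
  have hG := hQ.2.1
  unfold quadric at hG
  linarith [sq_nonneg l]

theorem sqrt_quadric_le_of_mem (hR : 0 < R) (hP : power R P = 0) (hl : 0 < l)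
    (hQ : Q ∈ quadricDomain R P l) : √(quadric (-outwardNormal R P) P l Q) ≤ 4 * l := by
  have ht := height_sq_lt_of_mem hR hP hQ
  rw [Real.sqrt_le_left (by positivity), quadric]
  linarith [distSq_nonneg (P := P) (Q := Q), sq_nonneg l]

theorem mem_quadricDomain_of_distSq_lt (hR : R ≠ 0) (hP : power R P = 0) (hl : 0 < l)
    (hQ : 0 < power R Q) (hPQ : distSq P Q < l ^ 2) : Q ∈ quadricDomain R P l := by
  refine ⟨hQ, ?_, lt_of_pow_lt_pow_left₀ 2 hl.le
    ((height_sq_le (dot_neg_outwardNormal_self hR hP)).trans_lt hPQ)⟩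
  unfold quadric
  nlinarith [sq_nonneg (height (-outwardNormal R P) P Q)]

theorem isCompact_quadricDomain_inner (hR : 0 < R) (hP : power R P = 0) (hl : 0 < l) {e : ℝ}
    (he : 0 < e) : IsCompact {Q | e ≤ power R Q ∧ e ≤ quadric (-outwardNormal R P) P l Q ∧
      height (-outwardNormal R P) P Q ≤ l / 2} := by
  refine (isCompact_distSq_le P (16 * l ^ 2)).of_isClosed_subset ?_ fun Q ⟨hpow, hG, ht⟩ =>
    distSq_le_of_mem hR hP ⟨he.trans_le hpow, he.trans_le hG, by linarith⟩
  exact (isClosed_le continuous_const continuous_power).inter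
    ((isClosed_le continuous_const (contDiff_quadric (n := 0)).continuous).inter
      (isClosed_le (contDiff_height (n := 0)).continuous continuous_const))

theorem sqrt_quadric_sub_le (hR : 0 < R) (hrR : r < R) (hl : 0 < l) (hlR : 20 * l ≤ R)
    (hP : power R P = 0) (hball : {Q | distSq P Q ≤ 16 * l ^ 2} ⊆ disk r)
    (hf : IsDivFormSolution (1 / R) (side R r) f) (hinf : WeaklyTendstoTop R r f)
    (hK : ∀ Q, l / 2 ≤ height (-outwardNormal R P) P Q → height (-outwardNormal R P) P Q ≤ l →
      0 ≤ quadric (-outwardNormal R P) P l Q → -K ≤ f Q) :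
    ∀ Q ∈ quadricDomain R P l, √(quadric (-outwardNormal R P) P l Q) - (K + 4 * l) ≤ f Q := by
  have hν := dot_neg_outwardNormal_self hR.ne' hP
  refine le_of_weaklyTendstoTop (M := -K) (C := 1 / l) hR hrR isOpen_quadricDomain
    (fun Q hQ => (mem_side_iff hR).2 ⟨hball (distSq_le_of_mem hR hP hQ), hQ.1⟩)
    (isCompact_distSq_le P (16 * l ^ 2)) hball (fun Q hQ => distSq_le_of_mem hR hP hQ) hf hinf
    ((contDiff_quadric.contDiffOn.sqrt fun Q hQ => hQ.2.1.ne').sub contDiffOn_const)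
    (fun Q hQ => lt_twiceMeanCurvature_sqrt_quadric hν hl hlR hQ.2.1
      (height_sq_lt_of_mem hR hP hQ).le)
    (fun Q hQ => by linarith [sqrt_quadric_le_of_mem hR hP hl hQ])
    contDiff_quadric.contDiffOn (fun Q hQ => hQ.2.1) (by positivity)
    (fun Q hQ => dot_normalizedGrad_sub_sqrt_quadric_le f hν hl hQ.2.1) fun e he =>
    ⟨_, ?_, isCompact_quadricDomain_inner hR hP hl he, fun Q hQ hG hpow => ⟨hpow, hG, ?_⟩⟩
  · exact fun Q ⟨hpow, hG, ht⟩ => ⟨he.trans_le hpow, he.trans_le hG, by linarith⟩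
  · by_contra! ht
    have hlt : f Q < √(quadric (-outwardNormal R P) P l Q) - (K + 4 * l) := hQ.2
    linarith [hK Q ht.le hQ.1.2.2.le hQ.1.2.1.le, sqrt_quadric_le_of_mem hR hP hl hQ.1]

theorem le_of_le_of_height (hR : 0 < R) (hrR : r < R) (hl : 0 < l) (hlR : 20 * l ≤ R)
    (hP : power R P = 0) (hball : {Q | distSq P Q ≤ 16 * l ^ 2} ⊆ disk r)
    (hf : IsDivFormSolution (1 / R) (side R r) f) (hinf : WeaklyTendstoTop R r f)
    (hK : ∀ Q, l / 2 ≤ height (-outwardNormal R P) P Q → height (-outwardNormal R P) P Q ≤ l →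
      0 ≤ quadric (-outwardNormal R P) P l Q → -K ≤ f Q) (hQ : 0 < power R Q)
    (hPQ : distSq P Q < l ^ 2) : -(K + 4 * l) ≤ f Q := by
  have h := sqrt_quadric_sub_le hR hrR hl hlR hP hball hf hinf hK Q
    (mem_quadricDomain_of_distSq_lt hR.ne' hP hl hQ hPQ)
  linarith [Real.sqrt_nonneg (quadric (-outwardNormal R P) P l Q)]

end propagation

/-! ### The logarithmic barrier -/

/-- The barrier `A log (h / (q + κ)) - Γ |Q - P|² / 2 - k`, where `q` is the power of `Q`. -/
def logBarrier (R : ℝ) (P : ℝ × ℝ) (Γ A h κ k : ℝ) (Q : ℝ × ℝ) : ℝ :=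
  A * (Real.log h - Real.log (power R Q + κ)) - Γ / 2 * distSq P Q - k

/-- Parameters for which `logBarrier` is a strict subsolution on `{q + κ < h, |Q - P| < δ}`, its
logarithmic term rises to `m` on the arc, and its quadratic term to `m` on `{|Q - P| = δ}`. -/
structure IsLogBarrierData (R δ m Γ A h κ : ℝ) : Prop where
  quadratic_coeff_pos : 0 < Γ
  log_coeff_pos : 0 < A
  log_coeff_eq : A * (20 * (Γ + (1 + Γ * δ) / R)) = 1
  shift_pos : 0 < κ
  shift_lt : κ < h
  width_le : (Γ + (1 + Γ * δ) / R) * h ≤ A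
  width_le_sq : h ≤ R ^ 2 / 2
  quadratic_rise : Γ / 2 * δ ^ 2 = m
  log_rise : A * (Real.log h - Real.log κ) = m

section logBarrier

variable {R r δ m Γ A h κ k K M : ℝ} {f : ℝ × ℝ → ℝ} {P Q p v w : ℝ × ℝ}

theorem exists_isLogBarrierData (hR : 0 < R) (hδ : 0 < δ) (hm : 0 < m) :
    ∃ Γ A h κ, IsLogBarrierData R δ m Γ A h κ := by
  set Γ := 2 * m / δ ^ 2 with hΓ
  have hΓ₀ : 0 < Γ := by positivity
  set Λ := Γ + (1 + Γ * δ) / R with hΛ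
  have hΛ₀ : 0 < Λ := by positivity
  set A := 1 / (20 * Λ) with hA
  have hA₀ : 0 < A := by positivity
  set h := min (A / Λ) (R ^ 2 / 2)
  have hh : 0 < h := by positivity
  refine ⟨Γ, A, h, h * Real.exp (-(m / A)), hΓ₀, hA₀, ?_, by positivity, ?_, ?_, min_le_right _ _,
    ?_, ?_⟩
  · rw [← hΛ, hA]; field_simp
  · exact mul_lt_of_lt_one_right hh (Real.exp_lt_one_iff.2 (neg_neg_of_pos (by positivity)))
  · rw [mul_comm, ← le_div_iff₀ hΛ₀]; exact min_le_left _ _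
  · rw [hΓ]; field_simp
  · rw [Real.log_mul hh.ne' (Real.exp_pos _).ne', Real.log_exp]; field_simp; ring

theorem dot_self_smul_sub_smul_le {α β a b : ℝ} (hα : 0 ≤ α) (hβ : 0 ≤ β) (ha : 0 ≤ a)
    (hb : 0 ≤ b) (hv : dot v v ≤ a ^ 2) (hw : dot w w ≤ b ^ 2) :
    dot (α • v - β • w) (α • v - β • w) ≤ (α * a + β * b) ^ 2 := by
  have hvw : |dot v w| ≤ a * b := abs_le_of_sq_le_sq
    ((dot_sq_le v w).trans (by
      rw [mul_pow]; exact mul_le_mul hv hw (dot_self_nonneg w) (sq_nonneg a))) (by positivity)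
  calc dot (α • v - β • w) (α • v - β • w)
      = α ^ 2 * dot v v + 2 * (α * β) * -dot v w + β ^ 2 * dot w w := by
        simp only [dot, Prod.fst_sub, Prod.snd_sub, Prod.smul_fst, Prod.smul_snd, smul_eq_mul]; ring
    _ ≤ α ^ 2 * a ^ 2 + 2 * (α * β) * (a * b) + β ^ 2 * b ^ 2 := by
        gcongr; exact (neg_le_abs _).trans hvw
    _ = (α * a + β * b) ^ 2 := by ring

theorem twiceMeanCurvature_eq_of_hessian {F G : ℝ × ℝ → ℝ} {L μ ξ η : ℝ}
    (hf : ∀ᶠ q in nhds p, HasPartials f (F q) (G q) q)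
    (hF : HasPartials F (L + μ * ξ ^ 2) (μ * (ξ * η)) p)
    (hG : HasPartials G (μ * (ξ * η)) (L + μ * η ^ 2) p) :
    twiceMeanCurvature f p = (L * (Wgraph f p ^ 2 + 1) + μ * (ξ ^ 2 + η ^ 2)
      + μ * (G p * ξ - F p * η) ^ 2) / Wgraph f p ^ 3 := by
  have hW : Wgraph f p = √(1 + F p ^ 2 + G p ^ 2) := by
    rw [Wgraph, hf.self_of_nhds.pdx_eq, hf.self_of_nhds.pdy_eq]
  rw [twiceMeanCurvature_eq hf hF hG, ← hW, Wgraph_sq, hf.self_of_nhds.pdx_eq,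
    hf.self_of_nhds.pdy_eq]
  ring

theorem hasPartials_logBarrier (hQ : 0 < power R Q + κ) :
    HasPartials (logBarrier R P Γ A h κ k)
      (2 * A * (Q.1 - R) / (power R Q + κ) - Γ * (Q.1 - P.1))
      (2 * A * Q.2 / (power R Q + κ) - Γ * (Q.2 - P.2)) Q := by
  have h := (((HasPartials.const (p := Q) A).mul ((HasPartials.const (Real.log h)).sub
    ((hasPartials_power.add (.const κ)).comp (Real.hasDerivAt_log hQ.ne')))).sub
    ((HasPartials.const (Γ / 2)).mul (hasPartials_distSq (P := P)))).sub (HasPartials.const k)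
  refine h.congr ?_ ?_ <;> · field_simp; ring

theorem twiceMeanCurvature_logBarrier (hQ : 0 < power R Q + κ) :
    twiceMeanCurvature (logBarrier R P Γ A h κ k) Q
      = ((2 * A / (power R Q + κ) - Γ) * (Wgraph (logBarrier R P Γ A h κ k) Q ^ 2 + 1)
        + 4 * A / (power R Q + κ) ^ 2 * ((Q.1 - R) ^ 2 + Q.2 ^ 2)
        + 4 * A / (power R Q + κ) ^ 2 * ((2 * A * Q.2 / (power R Q + κ) - Γ * (Q.2 - P.2))
          * (Q.1 - R) - (2 * A * (Q.1 - R) / (power R Q + κ) - Γ * (Q.1 - P.1)) * Q.2) ^ 2)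
        / Wgraph (logBarrier R P Γ A h κ k) Q ^ 3 := by
  have hev : ∀ᶠ p in nhds Q, 0 < power R p + κ :=
    (continuous_power.add continuous_const).continuousAt.eventually (lt_mem_nhds hQ)
  have hpower := (hasPartials_power (R := R) (p := Q)).add (.const κ)
  refine twiceMeanCurvature_eq_of_hessian (hev.mono fun p hp => hasPartials_logBarrier hp)
    (((((HasPartials.const (2 * A)).mul (HasPartials.fst.sub (.const R))).div hpower hQ.ne').sub
      ((HasPartials.const Γ).mul (HasPartials.fst.sub (.const P.1)))).congr ?_ ?_)
    (((((HasPartials.const (2 * A)).mul HasPartials.snd).div hpower hQ.ne').sub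
      ((HasPartials.const Γ).mul (HasPartials.snd.sub (.const P.2)))).congr ?_ ?_) <;>
  · field_simp; ring

theorem Wgraph_logBarrier_le (hR : 0 ≤ R) (hδ : 0 ≤ δ) (hΓ : 0 ≤ Γ) (hA : 0 ≤ A)
    (hQ : 0 < power R Q + κ) (hpow : 0 ≤ power R Q) (hPQ : distSq P Q ≤ δ ^ 2) :
    Wgraph (logBarrier R P Γ A h κ k) Q ≤ 1 + (2 * (A / (power R Q + κ)) * R + Γ * δ) := by
  have hF : 0 ≤ 2 * (A / (power R Q + κ)) := by positivity
  have hb := hasPartials_logBarrier (P := P) (Γ := Γ) (A := A) (h := h) (k := k) hQ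
  have hgrad : (pdx (logBarrier R P Γ A h κ k) Q, pdy (logBarrier R P Γ A h κ k) Q)
      = (2 * (A / (power R Q + κ))) • (Q - (R, 0)) - Γ • (Q - P) := by
    rw [hb.pdx_eq, hb.pdy_eq]
    ext <;> simp only [Prod.fst_sub, Prod.snd_sub, Prod.smul_fst, Prod.smul_snd, smul_eq_mul] <;>
      ring
  have hle := dot_self_smul_sub_smul_le (v := Q - (R, 0)) (w := Q - P) hF hΓ hR hδ
    (by simp only [dot, Prod.fst_sub, Prod.snd_sub]; unfold power at hpow; linarith) hPQ
  rw [← hgrad] at hle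
  refine Real.sqrt_le_iff.2 ⟨by positivity, ?_⟩
  have hnonneg : 0 ≤ 2 * (A / (power R Q + κ)) * R + Γ * δ := by positivity
  simp only [dot] at hle
  linarith [show (1 + (2 * (A / (power R Q + κ)) * R + Γ * δ)) ^ 2
    = 1 + 2 * (2 * (A / (power R Q + κ)) * R + Γ * δ)
      + (2 * (A / (power R Q + κ)) * R + Γ * δ) ^ 2 by ring]

theorem one_div_lt_of_hessian_bounds {W L Λ S T : ℝ} (hR : 0 < R) (hW : 0 < W) (hL : 0 ≤ L)
    (hT : 0 ≤ T) (hWL : W ≤ R * (L + Λ)) (hS : Λ * W ^ 2 < S) :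
    1 / R < (L * (W ^ 2 + 1) + S + T) / W ^ 3 := by
  rw [div_lt_div_iff₀ hR (by positivity)]
  calc 1 * W ^ 3 = W * W ^ 2 := by ring
    _ ≤ R * (L + Λ) * W ^ 2 := by gcongr
    _ = (L * W ^ 2 + Λ * W ^ 2) * R := by ring
    _ < (L * (W ^ 2 + 1) + S + T) * R := mul_lt_mul_of_pos_right (by linarith) hR

theorem IsLogBarrierData.lt_twiceMeanCurvature (hd : IsLogBarrierData R δ m Γ A h κ) (hR : 0 < R)
    (hδ : 0 < δ) (hpow : 0 < power R Q) (hQ : power R Q + κ < h) (hPQ : distSq P Q ≤ δ ^ 2) :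
    1 / R < twiceMeanCurvature (logBarrier R P Γ A h κ k) Q := by
  have hΓ := hd.quadratic_coeff_pos
  have hA := hd.log_coeff_pos
  have hτ : 0 < power R Q + κ := add_pos hpow hd.shift_pos
  have hW := Wgraph_logBarrier_le (h := h) (k := k) hR.le hδ.le hΓ.le hA.le hτ hpow.le hPQ
  have hWpos := Wgraph_pos (logBarrier R P Γ A h κ k) Q
  rw [twiceMeanCurvature_logBarrier hτ]
  set Λ := Γ + (1 + Γ * δ) / R with hΛ
  have hΛpos : 0 < Λ := by positivity
  have hRΛ : R * Λ = R * Γ + (1 + Γ * δ) := by rw [hΛ]; field_simp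
  set F := A / (power R Q + κ) with hF
  have hΛF : Λ < F := by
    rw [lt_div_iff₀ hτ]
    exact (mul_lt_mul_of_pos_left hQ hΛpos).trans_le hd.width_le
  have hΓΛ : Γ ≤ Λ := le_add_of_nonneg_right (by positivity)
  have hL : 2 * A / (power R Q + κ) = 2 * F := by ring
  have hμ : 4 * A / (power R Q + κ) ^ 2 = 80 * F ^ 2 * Λ := by
    have : 20 * A * Λ = 1 := by linarith [hd.log_coeff_eq]
    rw [hF, div_pow]; field_simp; linarith
  have hξ : R ^ 2 / 2 ≤ (Q.1 - R) ^ 2 + Q.2 ^ 2 := by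
    have := hd.width_le_sq
    have := hd.shift_pos
    have hpower : power R Q = R ^ 2 - ((Q.1 - R) ^ 2 + Q.2 ^ 2) := rfl
    linarith
  rw [hL, hμ]
  have hFR : R * Λ < R * F := mul_lt_mul_of_pos_left hΛF hR
  have hW4 : Wgraph (logBarrier R P Γ A h κ k) Q ≤ 4 * F * R := by
    linarith [mul_pos hR hΓ]
  refine one_div_lt_of_hessian_bounds (Λ := Λ) hR hWpos (by linarith) (by positivity)
    (by linarith) ?_
  calc Λ * Wgraph (logBarrier R P Γ A h κ k) Q ^ 2 ≤ Λ * (4 * F * R) ^ 2 := by gcongr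
    _ < 80 * F ^ 2 * Λ * (R ^ 2 / 2) := by
      have : 0 < Λ * (F * R) ^ 2 := mul_pos hΛpos (pow_pos (mul_pos (hΛpos.trans hΛF) hR) 2)
      linarith
    _ ≤ 80 * F ^ 2 * Λ * ((Q.1 - R) ^ 2 + Q.2 ^ 2) := by gcongr

theorem contDiffOn_logBarrier : ContDiffOn ℝ 2 (logBarrier R P Γ A h κ k)
    {Q | 0 < power R Q + κ} :=
  ((contDiffOn_const.mul (contDiffOn_const.sub
    ((contDiff_power.add contDiff_const).contDiffOn.log fun _ hQ => hQ.ne'))).sub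
      (contDiff_const.mul contDiff_distSq).contDiffOn).sub contDiffOn_const

theorem IsLogBarrierData.logBarrier_lt (hd : IsLogBarrierData R δ m Γ A h κ)
    (hQ : 0 < power R Q) :
    logBarrier R P Γ A h κ k Q < m - Γ / 2 * distSq P Q - k := by
  have hlog : Real.log κ < Real.log (power R Q + κ) :=
    Real.log_lt_log hd.shift_pos (by linarith)
  have hterm : A * (Real.log h - Real.log (power R Q + κ)) < m := by
    rw [← hd.log_rise]
    exact mul_lt_mul_of_pos_left (by linarith) hd.log_coeff_pos
  unfold logBarrier
  linarith

theorem IsLogBarrierData.logBarrier_self (hd : IsLogBarrierData R δ m Γ A h κ)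
    (hP : power R P = 0) : logBarrier R P Γ A h κ k P = m - k := by
  simp [logBarrier, hP, distSq, dot, hd.log_rise]

theorem IsLogBarrierData.mem_of_neg_lt (hd : IsLogBarrierData R δ m Γ A h κ)
    (hQ : 0 < power R Q) (hb : -k < logBarrier R P Γ A h κ k Q) :
    power R Q + κ < h ∧ distSq P Q < δ ^ 2 := by
  have hΓ := hd.quadratic_coeff_pos
  have hκ := hd.shift_pos
  constructor
  · rw [← Real.log_lt_log_iff (by linarith) (hκ.trans hd.shift_lt), ← sub_pos]
    refine pos_of_mul_pos_right ?_ hd.log_coeff_pos.le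
    have := mul_nonneg (half_pos hΓ).le (distSq_nonneg (P := P) (Q := Q))
    unfold logBarrier at hb
    linarith
  · refine lt_of_mul_lt_mul_left ?_ (half_pos hΓ).le
    rw [hd.quadratic_rise]
    linarith [hd.logBarrier_lt (P := P) (k := k) hQ]

/-- The part of the domain of the logarithmic barrier that lies inside the circle. -/
def logDomain (R δ : ℝ) (P : ℝ × ℝ) (h κ : ℝ) : Set (ℝ × ℝ) :=
  {Q | 0 < power R Q ∧ power R Q + κ < h ∧ distSq P Q < δ ^ 2}

theorem isOpen_logDomain : IsOpen (logDomain R δ P h κ) :=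
  (isOpen_lt continuous_const continuous_power).inter
    ((isOpen_lt (continuous_power.add continuous_const) continuous_const).inter
      (isOpen_lt (contDiff_distSq (n := 0)).continuous continuous_const))

theorem IsLogBarrierData.isCompact_superlevel (hd : IsLogBarrierData R δ m Γ A h κ) (hK : K < k)
    {e : ℝ} (he : 0 < e) :
    IsCompact ({Q | e ≤ power R Q} ∩ logBarrier R P Γ A h κ k ⁻¹' Ici (-K)) := by
  have hsub : {Q | e ≤ power R Q} ⊆ {Q | 0 < power R Q + κ} := fun Q hQ =>
    add_pos (he.trans_le hQ) hd.shift_pos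
  exact (isCompact_distSq_le P (δ ^ 2)).of_isClosed_subset
    ((contDiffOn_logBarrier.continuousOn.mono hsub).preimage_isClosed_of_isClosed
      (isClosed_le continuous_const continuous_power) isClosed_Ici)
    fun Q ⟨hpow, hb⟩ => (hd.mem_of_neg_lt (he.trans_le hpow)
      ((neg_lt_neg hK).trans_le hb)).2.le

theorem IsLogBarrierData.logBarrier_le (hd : IsLogBarrierData R δ m Γ A h κ) (hR : 0 < R)
    (hrR : r < R) (hδ : 0 < δ) (hball : {Q | distSq P Q ≤ δ ^ 2} ⊆ disk r) (hK : K < k)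
    (hf : IsDivFormSolution (1 / R) (side R r) f) (hinf : WeaklyTendstoTop R r f)
    (hlow : ∀ Q, 0 < power R Q → distSq P Q < δ ^ 2 → -K ≤ f Q) :
    ∀ Q ∈ logDomain R δ P h κ, logBarrier R P Γ A h κ k Q ≤ f Q := by
  refine le_of_weaklyTendstoTop (M := m - k) (g := fun _ => 1) (C := 0) hR hrR isOpen_logDomain
    (fun Q hQ => (mem_side_iff hR).2 ⟨hball hQ.2.2.le, hQ.1⟩) (isCompact_distSq_le P (δ ^ 2)) hball
    (fun Q hQ => hQ.2.2.le) hf hinf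
    (contDiffOn_logBarrier.mono fun Q hQ => add_pos hQ.1 hd.shift_pos)
    (fun Q hQ => hd.lt_twiceMeanCurvature hR hδ hQ.1 hQ.2.1 hQ.2.2.le) (fun Q hQ => ?_)
    contDiffOn_const (fun _ _ => one_pos) le_rfl (fun Q _ => ?_) fun e he =>
    ⟨{Q | e ≤ power R Q} ∩ logBarrier R P Γ A h κ k ⁻¹' Ici (-K), fun Q ⟨hpow, hb⟩ => ?_,
      hd.isCompact_superlevel hK he, fun Q ⟨hQ, hlt⟩ _ hpow =>
        ⟨hpow, (hlow Q hQ.1 hQ.2.2).trans hlt.le⟩⟩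
  · have := mul_nonneg (half_pos hd.quadratic_coeff_pos).le (distSq_nonneg (P := P) (Q := Q))
    linarith [hd.logBarrier_lt (P := P) (k := k) hQ.1]
  · rw [(HasPartials.const 1).grad_eq]
    simp [dot]
  · have hpos : 0 < power R Q := he.trans_le hpow
    exact ⟨hpos, hd.mem_of_neg_lt hpos ((neg_lt_neg hK).trans_le hb)⟩

theorem exists_nhds_lt_of_le (hR : 0 < R) (hrR : r < R) (hδ : 0 < δ) (hP : power R P = 0)
    (hball : {Q | distSq P Q ≤ δ ^ 2} ⊆ disk r) (K M : ℝ) :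
    ∃ V ∈ nhds P, ∀ f, IsDivFormSolution (1 / R) (side R r) f → WeaklyTendstoTop R r f →
      (∀ Q, 0 < power R Q → distSq P Q < δ ^ 2 → -K ≤ f Q) → ∀ Q ∈ side R r ∩ V, M < f Q := by
  obtain ⟨Γ, A, h, κ, hd⟩ := exists_isLogBarrierData (m := max 1 (M + K + 2)) hR hδ (by positivity)
  have hPP : distSq P P < δ ^ 2 := by simpa [distSq, dot] using pow_pos hδ 2
  have hbP : M < logBarrier R P Γ A h κ (K + 1) P := by
    rw [hd.logBarrier_self hP]
    linarith [le_max_right 1 (M + K + 2)]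
  have hPκ : 0 < power R P + κ := by rw [hP, zero_add]; exact hd.shift_pos
  have hPh : power R P + κ < h := by rw [hP, zero_add]; exact hd.shift_lt
  have hpower : ContinuousAt (fun Q => power R Q + κ) P :=
    (continuous_power.add continuous_const).continuousAt
  have hbarrier : ContinuousAt (logBarrier R P Γ A h κ (K + 1)) P :=
    contDiffOn_logBarrier.continuousOn.continuousAt
      (hpower.eventually (lt_mem_nhds hPκ))
  refine ⟨_, (hpower.eventually (gt_mem_nhds hPh)).and
    (((contDiff_distSq (n := 0)).continuous.continuousAt.eventually (gt_mem_nhds hPP)).and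
      (hbarrier.eventually (lt_mem_nhds hbP))), fun f hf hinf hlow Q ⟨hQ, hh, hPQ, hM⟩ => ?_⟩
  exact hM.trans_le (hd.logBarrier_le hR hrR hδ hball (lt_add_one K) hf hinf hlow Q
    ⟨((mem_side_iff hR).1 hQ).2, hh, hPQ⟩)

end logBarrier

/-! ### Boundary values on the arc -/

section boundaryValues

variable {R r : ℝ} {P : ℝ × ℝ} {f v : ℝ × ℝ → ℝ} {u w : ℕ → ℝ × ℝ → ℝ}

theorem exists_distSq_le_subset {U : Set (ℝ × ℝ)} (hU : U ∈ nhds P) :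
    ∃ ε > 0, {Q | distSq P Q ≤ ε ^ 2} ⊆ U := by
  obtain ⟨ε, hε, hεU⟩ := Metric.nhds_basis_closedBall.mem_iff.1 hU
  exact ⟨ε, hε, fun Q hQ => hεU (mem_closedBall_iff_norm.2 (norm_le_of_dot_self_le hε.le hQ))⟩

theorem distSq_le_of_quadric_nonneg {ν Q : ℝ × ℝ} {l : ℝ} (ht : 0 ≤ height ν P Q)
    (htl : height ν P Q ≤ l) (hG : 0 ≤ quadric ν P l Q) : distSq P Q ≤ 15 * l ^ 2 := by
  have := pow_le_pow_left₀ ht htl 2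
  unfold quadric at hG
  linarith

/-- That `V` does not depend on `f` is what makes the statement pass to limits of sequences of
solutions. -/
theorem exists_isCompact_forall_exists_nhds_lt (hR : 0 < R) (hrR : r < R) (hP : P ∈ arc R r) :
    ∃ S ⊆ side R r, IsCompact S ∧ ∀ K M : ℝ, ∃ V ∈ nhds P, ∀ f,
      IsDivFormSolution (1 / R) (side R r) f → WeaklyTendstoTop R r f → (∀ Q ∈ S, -K ≤ f Q) →
        ∀ Q ∈ side R r ∩ V, M < f Q := by
  obtain ⟨hPr, hP0⟩ := (mem_arc_iff hR).1 hP
  obtain ⟨ε, hε, hεr⟩ := exists_distSq_le_subset (isOpen_disk.mem_nhds hPr)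
  obtain ⟨l, hl, hlε, hlR⟩ : ∃ l > 0, 4 * l ≤ ε ∧ 20 * l ≤ R :=
    ⟨min (ε / 4) (R / 20), by positivity, by linarith [min_le_left (ε / 4) (R / 20)],
      by linarith [min_le_right (ε / 4) (R / 20)]⟩
  have hball : {Q | distSq P Q ≤ 16 * l ^ 2} ⊆ disk r := fun Q hQ => hεr (hQ.trans (by
    calc 16 * l ^ 2 = (4 * l) ^ 2 := by ring
      _ ≤ ε ^ 2 := by gcongr))
  set t := height (-outwardNormal R P) P with ht
  set S := {Q | l / 2 ≤ t Q ∧ t Q ≤ l ∧ 0 ≤ quadric (-outwardNormal R P) P l Q}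
  have hdist : ∀ Q ∈ S, distSq P Q ≤ 15 * l ^ 2 := fun Q ⟨ht₁, ht₂, hG⟩ =>
    distSq_le_of_quadric_nonneg (by linarith) ht₂ hG
  refine ⟨S, fun Q hQ => (mem_side_iff hR).2 ⟨hball ((hdist Q hQ).trans (by gcongr; norm_num)), ?_⟩,
    ?_, fun K M => ?_⟩
  · have hlt : R * l ≤ R * (2 * t Q) := by gcongr; linarith [hQ.1]
    have hlR' : 20 * l * l ≤ R * l := by gcongr
    rw [power_eq hR.ne' hP0, ← ht]
    linarith [hdist Q hQ, mul_pos hl hl]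
  · exact (isCompact_distSq_le P (15 * l ^ 2)).of_isClosed_subset
      ((isClosed_le continuous_const (contDiff_height (n := 0)).continuous).inter
        ((isClosed_le (contDiff_height (n := 0)).continuous continuous_const).inter
          (isClosed_le continuous_const (contDiff_quadric (n := 0)).continuous))) hdist
  · obtain ⟨V, hV, hVf⟩ := exists_nhds_lt_of_le hR hrR hl hP0
      (fun Q (hQ : distSq P Q ≤ l ^ 2) => hball (show distSq P Q ≤ 16 * l ^ 2 by
        linarith [sq_nonneg l])) (K + 4 * l) M
    exact ⟨V, hV, fun f hf hinf hK => hVf f hf hinf fun Q hQ hPQ =>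
      le_of_le_of_height hR hrR hl hlR hP0 hball hf hinf
        (fun Q ht₁ ht₂ hG => hK Q ⟨ht₁, ht₂, hG⟩) hQ hPQ⟩

theorem WeaklyTendstoTop.tendsto (hR : 0 < R) (hrR : r < R) (hinf : WeaklyTendstoTop R r f)
    (hf : IsDivFormSolution (1 / R) (side R r) f) (hP : P ∈ arc R r) :
    Tendsto f (nhdsWithin P (side R r)) atTop := by
  obtain ⟨S, hSD, hS, hmain⟩ := exists_isCompact_forall_exists_nhds_lt hR hrR hP
  obtain ⟨k, hk⟩ := hS.bddBelow_image (hf.contDiffOn.continuousOn.mono hSD)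
  refine tendsto_atTop.2 fun M => ?_
  obtain ⟨V, hV, hVf⟩ := hmain (-k) M
  refine mem_of_superset (inter_mem_nhdsWithin _ hV) fun Q hQ =>
    (hVf f hf hinf (fun p hp => ?_) Q hQ).le
  rw [neg_neg]
  exact hk (mem_image_of_mem f hp)

theorem tendsto_atTop_of_tendstoUniformlyOn (hR : 0 < R) (hrR : r < R)
    (hu : ∀ n, IsDivFormSolution (1 / R) (side R r) (u n))
    (hinf : ∀ n, WeaklyTendstoTop R r (u n)) (hv : ContinuousOn v (side R r))
    (hconv : ∀ K, IsCompact K → K ⊆ side R r → TendstoUniformlyOn u v atTop K)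
    (hP : P ∈ arc R r) : Tendsto v (nhdsWithin P (side R r)) atTop := by
  obtain ⟨S, hSD, hS, hmain⟩ := exists_isCompact_forall_exists_nhds_lt hR hrR hP
  obtain ⟨k, hk⟩ := hS.bddBelow_image (hv.mono hSD)
  refine tendsto_atTop.2 fun M => ?_
  obtain ⟨V, hV, hVf⟩ := hmain (1 - k) M
  refine mem_of_superset (inter_mem_nhdsWithin _ hV) fun Q hQ => ?_
  have hlim : Tendsto (fun n => u n Q) atTop (nhds (v Q)) :=
    (hconv {Q} isCompact_singleton (singleton_subset_iff.2 hQ.1)).tendsto_at (mem_singleton Q)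
  refine ge_of_tendsto hlim ?_
  filter_upwards [Metric.tendstoUniformlyOn_iff.1 (hconv S hS hSD) 1 one_pos] with n hn
  refine (hVf (u n) (hu n) (hinf n) (fun p hp => ?_) Q hQ).le
  have hdist := (abs_lt.1 (hn p hp)).2
  linarith [show k ≤ v p from hk (mem_image_of_mem v hp)]

/-! ### Divergence lines -/

theorem eq_of_forall_mem_arc_enorm2_eq (hr : 0 < r) (hrR : r < R) {z : ℝ × ℝ}
    (hz : ∀ q ∈ arc R r, enorm2 (q - z) = R) : z = (R, 0) := by
  have hR := hr.trans hrR
  have hcircle : ∀ x y, x ^ 2 + y ^ 2 = 2 * R * x → 2 * R * x < r ^ 2 →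
      (x - z.1) ^ 2 + (y - z.2) ^ 2 = R ^ 2 := fun x y hxy hx => by
    have hmem : (x, y) ∈ arc R r := (mem_arc_iff hR).2
      ⟨(mem_disk_iff hr).2 (hxy.trans_lt hx), by unfold power; linarith⟩
    rw [← hz _ hmem, enorm2_sq, Prod.fst_sub, Prod.snd_sub]
  obtain ⟨x, hx, hxr, hxR⟩ : ∃ x > 0, 2 * R * x < r ^ 2 ∧ x < 2 * R := by
    refine ⟨r ^ 2 / (4 * R), by positivity, ?_, ?_⟩
    · field_simp; norm_num
    · rw [div_lt_iff₀ (by positivity)]; nlinarith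
  have hy_pos : 0 < 2 * R * x - x ^ 2 := by nlinarith
  have hy : √(2 * R * x - x ^ 2) ^ 2 = 2 * R * x - x ^ 2 := Real.sq_sqrt hy_pos.le
  set y := √(2 * R * x - x ^ 2)
  have h₀ := hcircle 0 0 (by ring) (by simpa using pow_pos hr 2)
  have h₁ := hcircle x y (by linarith) hxr
  have h₂ := hcircle x (-y) (by linarith [neg_sq y]) hxr
  have hz₂ : z.2 = 0 :=
    (mul_eq_zero.1 (by linarith : y * z.2 = 0)).resolve_left (Real.sqrt_pos.2 hy_pos).ne'
  have hz₁ : z.1 - R = 0 :=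
    (mul_eq_zero.1 (by rw [hz₂] at h₀ h₁; linarith : x * (z.1 - R) = 0)).resolve_left hx.ne'
  exact Prod.ext (sub_eq_zero.1 hz₁) hz₂

theorem IsDivergenceLine.exists_tendsto_normalizedGrad {H : ℝ} (hr : 0 < r)
    (hrH : r < 1 / (2 * H)) (h : IsDivergenceLine H (disk r) w (arc (1 / (2 * H)) r)) :
    ∃ φ : ℕ → ℕ, StrictMono φ ∧ ∀ Q ∈ arc (1 / (2 * H)) r,
      Tendsto (fun n => normalizedGrad (w (φ n)) Q) atTop
        (nhds (outwardNormal (1 / (2 * H)) Q)) := by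
  obtain ⟨z, -, hz, -, -, φ, hφ, hN⟩ := h
  obtain rfl := eq_of_forall_mem_arc_enorm2_eq hr hrH hz
  refine ⟨φ, hφ, fun Q hQ => ?_⟩
  have hneg : Continuous fun N : ℝ × ℝ × ℝ => (-N.1, -N.2.1) := by fun_prop
  convert (hneg.tendsto _).comp (hN Q hQ) using 2
  · simp [normalizedGrad, normalVec, neg_div]
  · simp only [outwardNormal, div_div_eq_mul_div, div_one]
    ext <;> simp only <;> ring

theorem tendsto_normalizedGrad {p : ℝ × ℝ}
    (h : Tendsto (fun n => grad (w n) p) atTop (nhds (grad v p))) :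
    Tendsto (fun n => normalizedGrad (w n) p) atTop (nhds (normalizedGrad v p)) := by
  have hcont : Continuous fun X : ℝ × ℝ => (√(1 + X.1 ^ 2 + X.2 ^ 2))⁻¹ • X :=
    (Continuous.inv₀ (f := fun X : ℝ × ℝ => √(1 + X.1 ^ 2 + X.2 ^ 2)) (by fun_prop)
      fun X => by positivity).smul continuous_id
  have heq : ∀ g : ℝ × ℝ → ℝ, (√(1 + (grad g p).1 ^ 2 + (grad g p).2 ^ 2))⁻¹ • grad g p
      = normalizedGrad g p := fun g => by
    ext <;> exact inv_mul_eq_div ..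
  simpa only [Function.comp_def, heq] using (hcont.tendsto _).comp h

theorem weaklyTendstoTop_of_tendsto_normalizedGrad (hr : 0 < r) (hrR : r < R)
    (hw : ∀ n, IsDivFormSolution (1 / R) (disk r) (w n)) (hv : ContDiffOn ℝ 2 v (side R r))
    (hside : ∀ p ∈ side R r,
      Tendsto (fun n => normalizedGrad (w n) p) atTop (nhds (normalizedGrad v p)))
    (harc : ∀ p ∈ arc R r,
      Tendsto (fun n => normalizedGrad (w n) p) atTop (nhds (outwardNormal R p))) :
    WeaklyTendstoTop R r v := by
  obtain ⟨γ, hγ, hside_eq, harc_eq⟩ := exists_contDiff_arc_graph hr hrR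
  refine weaklyTendstoTop_of_flux (hr.trans hrR) hrR hv fun φ hφ hc hφr => ?_
  have hX : ∀ n, ContDiffOn ℝ 1 (normalizedGrad (w n)) (disk r) := fun n =>
    contDiffOn_normalizedGrad isOpen_disk (hw n).contDiffOn
  rw [hside_eq]
  refine setIntegral_fluxIntegrand_eq_zero_of_tendsto hγ hφ hc isOpen_disk hφr
    (V := fun n => normalizedGrad (w n) - outwardNormal R) (B := 3)
    (fun n => (hX n).sub contDiff_outwardNormal.contDiffOn) (fun n p hp => ?_)
    (fun n p hp => norm_normalizedGrad_sub_outwardNormal_le (w n) hrR hp) (fun p hp hγp => ?_)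
    (fun p hp hγp => ?_)
  · rw [divergence_sub (((hX n).differentiableOn one_ne_zero).differentiableAt
      (isOpen_disk.mem_nhds hp)) ((contDiff_outwardNormal (n := 1)).differentiable one_ne_zero p),
      divergence_outwardNormal, show divergence (normalizedGrad (w n)) p = 1 / R from
        (hw n).curvature_eq p hp]
    ring
  · exact (hside p (hside_eq ▸ ⟨hp, hγp⟩)).sub_const _
  · simpa using (harc p (harc_eq ▸ ⟨hp, hγp⟩)).sub_const (outwardNormal R p)

theorem IsDivergenceLine.weaklyTendstoTop {H : ℝ} (hr : 0 < r) (hrH : r < 1 / (2 * H))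
    (hline : IsDivergenceLine H (disk r) w (arc (1 / (2 * H)) r))
    (hw : ∀ n, IsDivFormSolution (1 / (1 / (2 * H))) (disk r) (w n))
    (huw : ∀ n, EqOn (u n) (w n) (side (1 / (2 * H)) r))
    (hv : ContDiffOn ℝ 2 v (side (1 / (2 * H)) r))
    (hgrad : ∀ p ∈ side (1 / (2 * H)) r,
      Tendsto (fun n => grad (u n) p) atTop (nhds (grad v p))) :
    WeaklyTendstoTop (1 / (2 * H)) r v := by
  obtain ⟨φ, hφ, harc⟩ := hline.exists_tendsto_normalizedGrad hr hrH
  refine weaklyTendstoTop_of_tendsto_normalizedGrad hr hrH (fun n => hw (φ n)) hv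
    (fun p hp => ?_) harc
  exact ((tendsto_normalizedGrad (hgrad p hp)).comp hφ.tendsto_atTop).congr fun n =>
    normalizedGrad_congr ((huw (φ n)).eventuallyEq_of_mem (isOpen_side.mem_nhds hp))

theorem tendsto_nhdsWithin_atTop_iff_enorm2 {D : Set (ℝ × ℝ)} :
    Tendsto f (nhdsWithin P D) atTop ↔
      ∀ M, ∃ δ > 0, ∀ Q ∈ D, enorm2 (Q - P) < δ → M < f Q := by
  have hbasis : (nhds P).HasBasis (0 < ·) fun δ => {Q | enorm2 (Q - P) < δ} := by
    refine ⟨fun U => ⟨fun hU => ?_, fun ⟨δ, hδ, hδU⟩ => mem_of_superset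
      ((isOpen_lt (continuous_enorm2.comp (continuous_id.sub continuous_const))
        continuous_const).mem_nhds ?_) hδU⟩⟩
    · obtain ⟨δ, hδ, hδU⟩ := Metric.mem_nhds_iff.1 hU
      exact ⟨δ, hδ, fun Q hQ => hδU (mem_ball_iff_norm.2 ((norm_le_enorm2 _).trans_lt hQ))⟩
    · simpa [enorm2] using hδ
  rw [((nhdsWithin_hasBasis hbasis D).tendsto_iff atTop_basis_Ioi)]
  simp only [true_imp_iff, mem_Ioi, mem_inter_iff, and_imp, mem_ofPred_eq]
  exact forall_congr' fun M => exists_congr fun δ => and_congr_right fun _ =>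
    forall_congr' fun Q => ⟨fun h hQ hδ => h hδ hQ, fun h hδ hQ => h hQ hδ⟩

end boundaryValues

/-- if a sequence of solutions on `D⁺` converges (with gradients) to a
solution `u` and either (2a) every `u_n` tends to `+∞` on the convex boundary arc `C`,
or (2b) the `u_n` extend to `D(r)` with `C` a divergence line of the extensions, then
`u` tends to `+∞` at every point of `C`. -/
theorem stmt_12 (H r : ℝ) (hH : 0 < H) (hr : 0 < r) (hr' : r < 1 / (2 * H))
    (u : ℕ → ℝ × ℝ → ℝ) (v : ℝ × ℝ → ℝ)
    (hu : ∀ n, IsCMCSolution H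
      {p : ℝ × ℝ | enorm2 p < r ∧ enorm2 (p - (1 / (2 * H), 0)) < 1 / (2 * H)} (u n))
    (hv : IsCMCSolution H
      {p : ℝ × ℝ | enorm2 p < r ∧ enorm2 (p - (1 / (2 * H), 0)) < 1 / (2 * H)} v)
    (hconv : ∀ K : Set (ℝ × ℝ), IsCompact K →
      K ⊆ {p : ℝ × ℝ | enorm2 p < r ∧ enorm2 (p - (1 / (2 * H), 0)) < 1 / (2 * H)} →
      TendstoUniformlyOn (fun n p => u n p) v atTop K ∧
      TendstoUniformlyOn (fun n p => ((pdx (u n) p, pdy (u n) p) : ℝ × ℝ))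
        (fun p => (pdx v p, pdy v p)) atTop K)
    (halt :
      (∀ n, ∀ P ∈ {p : ℝ × ℝ | enorm2 p < r ∧ enorm2 (p - (1 / (2 * H), 0)) = 1 / (2 * H)},
        ∀ M : ℝ, ∃ δ > 0,
          ∀ Q ∈ {p : ℝ × ℝ | enorm2 p < r ∧ enorm2 (p - (1 / (2 * H), 0)) < 1 / (2 * H)},
            enorm2 (Q - P) < δ → u n Q > M) ∨
      (∃ w : ℕ → ℝ × ℝ → ℝ,
        (∀ n, IsCMCSolution H {p : ℝ × ℝ | enorm2 p < r} (w n)) ∧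
        (∀ n, ∀ p ∈ {p : ℝ × ℝ | enorm2 p < r ∧
            enorm2 (p - (1 / (2 * H), 0)) < 1 / (2 * H)}, u n p = w n p) ∧
        IsDivergenceLine H {p : ℝ × ℝ | enorm2 p < r} w
          {p : ℝ × ℝ | enorm2 p < r ∧ enorm2 (p - (1 / (2 * H), 0)) = 1 / (2 * H)})) :
    ∀ P ∈ {p : ℝ × ℝ | enorm2 p < r ∧ enorm2 (p - (1 / (2 * H), 0)) = 1 / (2 * H)},
      ∀ M : ℝ, ∃ δ > 0,
        ∀ Q ∈ {p : ℝ × ℝ | enorm2 p < r ∧ enorm2 (p - (1 / (2 * H), 0)) < 1 / (2 * H)},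
          enorm2 (Q - P) < δ → v Q > M := by
  have hR : 0 < 1 / (2 * H) := by positivity
  have hsol : ∀ {D f}, IsOpen D → IsCMCSolution H D f →
      IsDivFormSolution (1 / (1 / (2 * H))) D f := fun hD hf => by
    simpa only [one_div_one_div] using hf.isDivFormSolution hD
  refine fun P hP => tendsto_nhdsWithin_atTop_iff_enorm2.1 ?_
  rcases halt with hinf | ⟨w, hw, huw, hline⟩
  · exact tendsto_atTop_of_tendstoUniformlyOn hR hr' (fun n => hsol isOpen_side (hu n))
      (fun n => weaklyTendstoTop_of_tendsto hR fun Q hQ =>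
        tendsto_nhdsWithin_atTop_iff_enorm2.2 (hinf n Q hQ))
      hv.1.continuousOn (fun K hK hKs => (hconv K hK hKs).1) hP
  · have hgrad : ∀ p ∈ side (1 / (2 * H)) r,
        Tendsto (fun n => grad (u n) p) atTop (nhds (grad v p)) := fun p hp =>
      (hconv {p} isCompact_singleton (singleton_subset_iff.2 hp)).2.tendsto_at (mem_singleton p)
    have hweak := hline.weaklyTendstoTop hr hr' (fun n => hsol isOpen_disk (hw n)) huw hv.1 hgrad
    exact hweak.tendsto hR hr' (hsol isOpen_side hv) hP
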